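/- arXiv:2011.01199 — 3 statements merged into one kernel-verified Lean document; each statement's English description precedes it below -/
import Mathlib

section
/- Suppose 3/2 < α < 2. Then for every 1 ≤ i, j ≤ n, the sequence (Ŵ_{ij}(⌊dx⌋))_{d≥1} is a Cauchy sequence in L²(Ω). -/
open MeasureTheory ProbabilityTheory Filter

noncomputable section

/-- Hypotheses (H.1) and (H.2) on the pair `(φ, ψ)`, together with the
parameter constraints `β ∈ (0,1)`, `λ > 0`, `α ∈ (0, 2β]`, `ν ∈ (1,2]`. -/
def SelfSimilarHyp (β lam α ν : ℝ) (φ ψ : ℝ → ℝ) : Prop :=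
  β ∈ Set.Ioo (0 : ℝ) 1 ∧ 0 < lam ∧ α ∈ Set.Ioc (0 : ℝ) (2 * β) ∧
  ν ∈ Set.Ioc (1 : ℝ) 2 ∧
  -- (H.1): φ(y) = −λ(y−1)^α + ψ(y) on [1,∞)
  (∀ y : ℝ, 1 ≤ y → φ y = -lam * (y - 1) ^ α + ψ y) ∧
  -- ψ is twice differentiable on an open set containing [1,∞)
  (∃ S : Set ℝ, IsOpen S ∧ Set.Ici (1 : ℝ) ⊆ S ∧
    ∀ y ∈ S, DifferentiableAt ℝ ψ y ∧ DifferentiableAt ℝ (deriv ψ) y) ∧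
  -- bounds (a), (b) on ψ', ψ''
  (∃ C₀ : ℝ, 0 ≤ C₀ ∧
    (∀ y : ℝ, 1 < y → |deriv ψ y| ≤ C₀ * y ^ (α - 1)) ∧
    (∀ y : ℝ, 1 < y → |deriv (deriv ψ) y| ≤ C₀ * y⁻¹ * (y - 1) ^ (α - 1))) ∧
  -- (c): ψ'(1) = βψ(1) when α ≥ 1
  (1 ≤ α → deriv ψ 1 = β * ψ 1) ∧
  -- (H.2): bounds (d), (e) on φ', φ'' for y ≥ 2
  (∃ C₁ : ℝ, 0 < C₁ ∧ ∀ y : ℝ, 2 ≤ y →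
    ((α < 1 → |deriv φ y| ≤ C₁ * (y - 1) ^ (-ν) ∧
        |deriv (deriv φ) y| ≤ C₁ * (y - 1) ^ (-ν - 1)) ∧
     (1 ≤ α → |deriv φ y| ≤ C₁ * (y - 1) ^ (α - 2) ∧
        |deriv (deriv φ) y| ≤ C₁ * (y - 1) ^ (α - 3))))

/-- The covariance function `R(s,t) = (s∧t)^{2β} φ((s∨t)/(s∧t))` for `s,t > 0`,
and `R(s,t) = 0` if `s = 0` or `t = 0`. -/
def covR (β : ℝ) (φ : ℝ → ℝ) (s t : ℝ) : ℝ :=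
  if s = 0 ∨ t = 0 then 0 else (min s t) ^ (2 * β) * φ (max s t / min s t)

/-- `Δ(k,l) = R(k+1,l+1) − R(k,l+1) − R(k+1,l) + R(k,l)`. -/
def covΔ (β : ℝ) (φ : ℝ → ℝ) (k l : ℕ) : ℝ :=
  covR β φ (k + 1) (l + 1) - covR β φ k (l + 1) - covR β φ (k + 1) l + covR β φ k l

/-- `δ_{kl} = Δ(k,l)/√(Δ(k,k)Δ(l,l))`. -/
def covδ (β : ℝ) (φ : ℝ → ℝ) (k l : ℕ) : ℝ :=
  covΔ β φ k l / Real.sqrt (covΔ β φ k k * covΔ β φ l l)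

/-- For `m ∈ ℤ`, `a_α(m) = (1/2)(|m+1|^α + |m−1|^α − 2|m|^α)`. -/
def aFun (α : ℝ) (m : ℤ) : ℝ :=
  (|(m : ℝ) + 1| ^ α + |(m : ℝ) - 1| ^ α - 2 * |(m : ℝ)| ^ α) / 2

/-- A family of real random variables is centered jointly Gaussian if every finite
real-linear combination of its members has a centered Gaussian law. -/
def IsCenteredGaussianFamily {Ω ι : Type*} [MeasurableSpace Ω] (P : Measure Ω)
    (X : ι → Ω → ℝ) : Prop :=
  ∀ (s : Finset ι) (c : ι → ℝ), ∃ v : NNReal,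
    P.map (fun ω => ∑ i ∈ s, c i * X i ω) = gaussianReal 0 v

/-- The normalized increment `Ŷ^i_k = (X^i_{(k+1)/d} − X^i_{k/d}) / ‖X^i_{(k+1)/d} − X^i_{k/d}‖_{L²(Ω)}`. -/
def hatY {Ω : Type*} [MeasurableSpace Ω] (P : Measure Ω) {n : ℕ}
    (X : Fin n → ℝ → Ω → ℝ) (d : ℕ) (i : Fin n) (k : ℕ) (ω : Ω) : ℝ :=
  (X i (((k : ℝ) + 1) / d) ω - X i ((k : ℝ) / d) ω) /
    Real.sqrt (∫ ω', (X i (((k : ℝ) + 1) / d) ω' - X i ((k : ℝ) / d) ω') ^ 2 ∂P)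

/-- The Wishart matrix entry `Ŵ_{ij}(⌊dx⌋) = d^{1−α} Σ_{k=1}^{⌊dx⌋} (Ŷ^i_k Ŷ^j_k − 1_{i=j})`. -/
def hatW {Ω : Type*} [MeasurableSpace Ω] (P : Measure Ω) {n : ℕ}
    (X : Fin n → ℝ → Ω → ℝ) (α x : ℝ) (d : ℕ) (i j : Fin n) (ω : Ω) : ℝ :=
  (d : ℝ) ^ ((1 : ℝ) - α) * ∑ k ∈ Finset.Icc 1 ⌊(d : ℝ) * x⌋₊,
    (hatY P X d i k ω * hatY P X d j k ω - if i = j then 1 else 0)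

lemma gauss_m4 (v : NNReal) : ∫ x, x ^ 4 ∂(gaussianReal 0 v) = 3 * (v : ℝ) ^ 2 := by
  have h : ∫ x, x ^ 4 ∂(gaussianReal 0 v) =
      iteratedDeriv 4 (mgf (fun x ↦ x) (gaussianReal 0 v)) 0 := by
    rw [iteratedDeriv_mgf_zero] <;> simp
  rw [h, mgf_fun_id_gaussianReal]
  simp only [zero_mul, zero_add]
  generalize (v : ℝ) = c
  have hE : ∀ t : ℝ, HasDerivAt (fun t ↦ Real.exp (c * t ^ 2 / 2))
      (c * t * Real.exp (c * t ^ 2 / 2)) t := by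
    intro t
    have := (((hasDerivAt_pow 2 t).const_mul c).div_const 2).exp
    convert this using 1
    push_cast
    ring
  have hP : ∀ (p p' : ℝ → ℝ) (t : ℝ), HasDerivAt p (p' t) t →
      HasDerivAt (fun t ↦ p t * Real.exp (c * t ^ 2 / 2))
        ((p' t + p t * (c * t)) * Real.exp (c * t ^ 2 / 2)) t := by
    intro p p' t hp
    have h0 := hp.fun_mul (hE t)
    exact h0.congr_deriv (by ring)
  have d1 : deriv (fun t ↦ Real.exp (c * t ^ 2 / 2)) =
      fun t ↦ (c * t) * Real.exp (c * t ^ 2 / 2) := by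
    ext t; exact (hE t).deriv
  have d2 : deriv (fun t ↦ (c * t) * Real.exp (c * t ^ 2 / 2)) =
      fun t ↦ (c + c ^ 2 * t ^ 2) * Real.exp (c * t ^ 2 / 2) := by
    ext t
    have h1 : HasDerivAt (fun t : ℝ => c * t) c t := by
      simpa using (hasDerivAt_id t).const_mul c
    rw [(hP (fun t => c * t) (fun _ => c) t h1).deriv]
    ring
  have d3 : deriv (fun t ↦ (c + c ^ 2 * t ^ 2) * Real.exp (c * t ^ 2 / 2)) =
      fun t ↦ (3 * c ^ 2 * t + c ^ 3 * t ^ 3) * Real.exp (c * t ^ 2 / 2) := by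
    ext t
    have h1 : HasDerivAt (fun t : ℝ => c + c ^ 2 * t ^ 2) (c ^ 2 * (2 * t)) t := by
      simpa using ((hasDerivAt_pow 2 t).const_mul (c ^ 2)).const_add c
    rw [(hP (fun t => c + c ^ 2 * t ^ 2) (fun t => c ^ 2 * (2 * t)) t h1).deriv]
    ring
  have d4 : deriv (fun t ↦ (3 * c ^ 2 * t + c ^ 3 * t ^ 3) * Real.exp (c * t ^ 2 / 2)) 0 =
      3 * c ^ 2 := by
    have h1 : HasDerivAt (fun t : ℝ => 3 * c ^ 2 * t + c ^ 3 * t ^ 3)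
        (3 * c ^ 2 + c ^ 3 * (3 * (0:ℝ) ^ 2)) 0 := by
      simpa using ((hasDerivAt_id (0:ℝ)).const_mul (3 * c ^ 2)).fun_add
        ((hasDerivAt_pow 3 (0:ℝ)).const_mul (c ^ 3))
    rw [(hP (fun t => 3 * c ^ 2 * t + c ^ 3 * t ^ 3)
      (fun t => 3 * c ^ 2 + c ^ 3 * (3 * t ^ 2)) 0 h1).deriv]
    simp
  rw [iteratedDeriv_succ, iteratedDeriv_succ, iteratedDeriv_succ, iteratedDeriv_one, d1, d2, d3, d4]

lemma gauss_m2 (v : NNReal) : ∫ x, x ^ 2 ∂(gaussianReal 0 v) = (v : ℝ) := by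
  have h := variance_fun_id_gaussianReal (μ := 0) (v := v)
  rw [variance_eq_integral measurable_id'.aemeasurable] at h
  simpa using h

section wick
variable {Ω : Type*} [MeasurableSpace Ω] {P : Measure Ω}

lemma gauss_aem {G : Ω → ℝ} {v : NNReal} (h : P.map G = gaussianReal 0 v) : AEMeasurable G P := by
  by_contra hc
  rw [Measure.map_of_not_aemeasurable hc] at h
  exact (IsProbabilityMeasure.ne_zero (gaussianReal 0 v)) h.symm

lemma gauss_int {G : Ω → ℝ} {v : NNReal} (h : P.map G = gaussianReal 0 v) (n : ℕ) :
    Integrable (fun ω => G ω ^ n) P := by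
  have hm := gauss_aem h
  have h1 : Integrable (fun x : ℝ => x ^ n) (P.map G) := by
    rw [h]
    rcases Nat.eq_zero_or_pos n with rfl | hn
    · simp
    have h2 := memLp_id_gaussianReal (μ := 0) (v := v) n
    have h3 := h2.integrable_norm_pow (by omega)
    exact h3.mono (by fun_prop) (by simp)
  exact h1.comp_aemeasurable hm

lemma gauss_4 {G : Ω → ℝ} {v : NNReal} (h : P.map G = gaussianReal 0 v) :
    ∫ ω, G ω ^ 4 ∂P = 3 * (∫ ω, G ω ^ 2 ∂P) ^ 2 := by
  have hm := gauss_aem h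
  have h4 := integral_map (μ := P) hm (f := fun x : ℝ => x ^ 4) (by fun_prop)
  have h2 := integral_map (μ := P) hm (f := fun x : ℝ => x ^ 2) (by fun_prop)
  rw [h] at h4 h2
  rw [← h4, ← h2, gauss_m4, gauss_m2]

lemma wick_int2 (V : Submodule ℝ (Ω → ℝ)) (hV : ∀ G ∈ V, ∃ v, P.map G = gaussianReal 0 v)
    {A B : Ω → ℝ} (hA : A ∈ V) (hB : B ∈ V) : Integrable (fun ω => A ω * B ω) P := by
  obtain ⟨v1, h1⟩ := hV _ (V.add_mem hA hB)
  obtain ⟨v2, h2⟩ := hV _ (V.sub_mem hA hB)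
  have := ((gauss_int h1 2).sub (gauss_int h2 2)).const_mul (1/4)
  refine this.congr (Eventually.of_forall fun ω => ?_)
  simp only [Pi.add_apply, Pi.sub_apply]
  ring

lemma wick4 (V : Submodule ℝ (Ω → ℝ)) (hV : ∀ G ∈ V, ∃ v, P.map G = gaussianReal 0 v)
    {A B C D : Ω → ℝ} (hA : A ∈ V) (hB : B ∈ V) (hC : C ∈ V) (hD : D ∈ V) :
    Integrable (fun ω => A ω * B ω * (C ω * D ω)) P ∧
    ∫ ω, A ω * B ω * (C ω * D ω) ∂P =
      (∫ ω, A ω * B ω ∂P) * (∫ ω, C ω * D ω ∂P) + (∫ ω, A ω * C ω ∂P) * (∫ ω, B ω * D ω ∂P)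
      + (∫ ω, A ω * D ω ∂P) * (∫ ω, B ω * C ω ∂P) := by
  have iAA := wick_int2 V hV hA hA
  have iBB := wick_int2 V hV hB hB
  have iCC := wick_int2 V hV hC hC
  have iDD := wick_int2 V hV hD hD
  have iAB := wick_int2 V hV hA hB
  have iAC := wick_int2 V hV hA hC
  have iAD := wick_int2 V hV hA hD
  have iBC := wick_int2 V hV hB hC
  have iBD := wick_int2 V hV hB hD
  have iCD := wick_int2 V hV hC hD
  have key : ∀ b c d : ℝ, Integrable (fun ω => (A ω + b * B ω + c * C ω + d * D ω) ^ 4) P ∧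
      ∫ ω, (A ω + b * B ω + c * C ω + d * D ω) ^ 4 ∂P = 3 * (
        (∫ ω, A ω * A ω ∂P) + b ^ 2 * (∫ ω, B ω * B ω ∂P) + c ^ 2 * (∫ ω, C ω * C ω ∂P)
        + d ^ 2 * (∫ ω, D ω * D ω ∂P) + (2 * b) * (∫ ω, A ω * B ω ∂P)
        + (2 * c) * (∫ ω, A ω * C ω ∂P) + (2 * d) * (∫ ω, A ω * D ω ∂P)
        + (2 * b * c) * (∫ ω, B ω * C ω ∂P) + (2 * b * d) * (∫ ω, B ω * D ω ∂P)
        + (2 * c * d) * (∫ ω, C ω * D ω ∂P)) ^ 2 := by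
    intro b c d
    obtain ⟨v, hv⟩ := hV _ (V.add_mem (V.add_mem (V.add_mem hA (V.smul_mem b hB))
      (V.smul_mem c hC)) (V.smul_mem d hD))
    have h4 := gauss_4 hv
    have hi := gauss_int hv 4
    simp only [Pi.add_apply, Pi.smul_apply, smul_eq_mul] at h4 hi
    refine ⟨hi, ?_⟩
    rw [h4]
    congr 2
    rw [← integral_const_mul, ← integral_const_mul, ← integral_const_mul, ← integral_const_mul,
      ← integral_const_mul, ← integral_const_mul, ← integral_const_mul, ← integral_const_mul,
      ← integral_const_mul, ← integral_add, ← integral_add, ← integral_add, ← integral_add,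
      ← integral_add, ← integral_add, ← integral_add, ← integral_add, ← integral_add]
    · congr 1; ext ω; ring
    all_goals fun_prop
  have hdec : ∀ ω, A ω * B ω * (C ω * D ω) = (1/192) * (
      (A ω + 1 * B ω + 1 * C ω + 1 * D ω) ^ 4 - (A ω + 1 * B ω + 1 * C ω + (-1) * D ω) ^ 4
      - (A ω + 1 * B ω + (-1) * C ω + 1 * D ω) ^ 4 + (A ω + 1 * B ω + (-1) * C ω + (-1) * D ω) ^ 4
      - (A ω + (-1) * B ω + 1 * C ω + 1 * D ω) ^ 4 + (A ω + (-1) * B ω + 1 * C ω + (-1) * D ω) ^ 4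
      + (A ω + (-1) * B ω + (-1) * C ω + 1 * D ω) ^ 4
      - (A ω + (-1) * B ω + (-1) * C ω + (-1) * D ω) ^ 4) := by
    intro ω; ring
  simp_rw [hdec]
  obtain ⟨i1, e1⟩ := key 1 1 1
  obtain ⟨i2, e2⟩ := key 1 1 (-1)
  obtain ⟨i3, e3⟩ := key 1 (-1) 1
  obtain ⟨i4, e4⟩ := key 1 (-1) (-1)
  obtain ⟨i5, e5⟩ := key (-1) 1 1
  obtain ⟨i6, e6⟩ := key (-1) 1 (-1)
  obtain ⟨i7, e7⟩ := key (-1) (-1) 1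
  obtain ⟨i8, e8⟩ := key (-1) (-1) (-1)
  have j2 := i1.sub i2
  have j3 := j2.sub i3
  have j4 := j3.add i4
  have j5 := j4.sub i5
  have j6 := j5.add i6
  have j7 := j6.add i7
  have j8 := j7.sub i8
  refine ⟨j8.const_mul _, ?_⟩
  rw [integral_const_mul]
  erw [integral_sub j7 i8, integral_add j6 i7, integral_add j5 i6, integral_sub j4 i5,
    integral_add j3 i4, integral_sub j2 i3, integral_sub i1 i2]
  rw [e1, e2, e3, e4, e5, e6, e7, e8]
  ring

end wick

def incR (β : ℝ) (φ : ℝ → ℝ) (d e k l : ℕ) : ℝ :=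
  covR β φ (((k : ℝ) + 1) / d) (((l : ℝ) + 1) / e) - covR β φ ((k : ℝ) / d) (((l : ℝ) + 1) / e)
  - covR β φ (((k : ℝ) + 1) / d) ((l : ℝ) / e) + covR β φ ((k : ℝ) / d) ((l : ℝ) / e)

def Ssum (β : ℝ) (φ : ℝ → ℝ) (α x : ℝ) (d e : ℕ) : ℝ :=
  (d : ℝ) ^ (1 - α) * (e : ℝ) ^ (1 - α) * ∑ k ∈ Finset.Icc 1 ⌊(d : ℝ) * x⌋₊,
    ∑ l ∈ Finset.Icc 1 ⌊(e : ℝ) * x⌋₊, incR β φ d e k l ^ 2 / (incR β φ d d k k * incR β φ e e l l)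

section prob
variable {Ω : Type*} [MeasurableSpace Ω] {P : Measure Ω} [IsProbabilityMeasure P]

lemma span_gauss {ι : Type*} {X : ι → Ω → ℝ} (h : IsCenteredGaussianFamily P X) :
    ∀ G ∈ Submodule.span ℝ (Set.range X), ∃ v, P.map G = gaussianReal 0 v := by
  intro G hG
  obtain ⟨c, rfl⟩ := Finsupp.mem_span_range_iff_exists_finsupp.1 hG
  obtain ⟨v, hv⟩ := h c.support c
  refine ⟨v, ?_⟩
  rw [← hv]
  congr 1
  ext ω
  simp [Finsupp.sum, Finset.sum_apply]

lemma W_prod (β α x : ℝ) (φ : ℝ → ℝ) {n : ℕ} (X : Fin n → ℝ → Ω → ℝ)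
    (hgauss : IsCenteredGaussianFamily P (fun p : Fin n × ℝ => X p.1 p.2))
    (hcov : ∀ (i j : Fin n) (s t : ℝ), 0 ≤ s → 0 ≤ t →
      ∫ ω, X i s ω * X j t ω ∂P = if i = j then covR β φ s t else 0)
    (hpos : ∀ (i : Fin n) (k d : ℕ), 1 ≤ d →
      0 < ∫ ω, (X i (((k : ℝ) + 1) / d) ω - X i ((k : ℝ) / d) ω) ^ 2 ∂P) (i j : Fin n) :
    (∀ k d : ℕ, 1 ≤ d → 0 < incR β φ d d k k) ∧
    ∃ c : ℝ, ∀ d e : ℕ, 1 ≤ d → 1 ≤ e →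
      Integrable (fun ω => hatW P X α x d i j ω * hatW P X α x e i j ω) P ∧
      ∫ ω, hatW P X α x d i j ω * hatW P X α x e i j ω ∂P = c * Ssum β φ α x d e := by
  have hV := span_gauss hgauss
  set V := Submodule.span ℝ (Set.range (fun p : Fin n × ℝ => X p.1 p.2))
  have hXV : ∀ i t, X i t ∈ V := fun i t => Submodule.subset_span ⟨(i, t), rfl⟩
  -- covariance of increments
  have hinc : ∀ (i j : Fin n) (d e k l : ℕ),
      ∫ ω, (X i (((k : ℝ) + 1) / d) ω - X i ((k : ℝ) / d) ω) *
        (X j (((l : ℝ) + 1) / e) ω - X j ((l : ℝ) / e) ω) ∂P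
        = if i = j then incR β φ d e k l else 0 := by
    intro i j d e k l
    have p1 : 0 ≤ ((k : ℝ) + 1) / d := by positivity
    have p2 : 0 ≤ (k : ℝ) / d := by positivity
    have p3 : 0 ≤ ((l : ℝ) + 1) / e := by positivity
    have p4 : 0 ≤ (l : ℝ) / e := by positivity
    have e1 := hcov i j _ _ p1 p3
    have e2 := hcov i j _ _ p2 p3
    have e3 := hcov i j _ _ p1 p4
    have e4 := hcov i j _ _ p2 p4
    have i1 := wick_int2 V hV (hXV i (((k : ℝ) + 1) / d)) (hXV j (((l : ℝ) + 1) / e))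
    have i2 := wick_int2 V hV (hXV i ((k : ℝ) / d)) (hXV j (((l : ℝ) + 1) / e))
    have i3 := wick_int2 V hV (hXV i (((k : ℝ) + 1) / d)) (hXV j ((l : ℝ) / e))
    have i4 := wick_int2 V hV (hXV i ((k : ℝ) / d)) (hXV j ((l : ℝ) / e))
    have : ∀ ω, (X i (((k : ℝ) + 1) / d) ω - X i ((k : ℝ) / d) ω) *
        (X j (((l : ℝ) + 1) / e) ω - X j ((l : ℝ) / e) ω) =
        X i (((k : ℝ) + 1) / d) ω * X j (((l : ℝ) + 1) / e) ω
        - X i ((k : ℝ) / d) ω * X j (((l : ℝ) + 1) / e) ω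
        - X i (((k : ℝ) + 1) / d) ω * X j ((l : ℝ) / e) ω
        + X i ((k : ℝ) / d) ω * X j ((l : ℝ) / e) ω := fun ω => by ring
    simp_rw [this]
    have j2 := i1.sub i2
    have j3 := j2.sub i3
    erw [integral_add j3 i4, integral_sub j2 i3, integral_sub i1 i2]
    rw [e1, e2, e3, e4]
    unfold incR
    split_ifs <;> ring
  have hsq : ∀ (i : Fin n) (d k : ℕ),
      ∫ ω, (X i (((k : ℝ) + 1) / d) ω - X i ((k : ℝ) / d) ω) ^ 2 ∂P = incR β φ d d k k := by
    intro i d k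
    have := hinc i i d d k k
    simp only [if_true] at this
    rw [← this]
    congr 1; ext ω; ring
  have hp : ∀ k d : ℕ, 1 ≤ d → 0 < incR β φ d d k k := by
    intro k d hd
    rw [← hsq i]; exact hpos i k d hd
  refine ⟨hp, (if i = j then 2 else 1), ?_⟩
  -- hatY
  have hYV : ∀ (i : Fin n) (d k : ℕ), hatY P X d i k ∈ V := by
    intro i d k
    have := V.smul_mem (Real.sqrt (incR β φ d d k k))⁻¹
      (V.sub_mem (hXV i (((k : ℝ) + 1) / d)) (hXV i ((k : ℝ) / d)))
    convert this using 1
    ext ω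
    simp only [hatY, hsq, Pi.smul_apply, Pi.sub_apply, smul_eq_mul]
    ring
  have hYY : ∀ (i j : Fin n) (d e k l : ℕ), ∫ ω, hatY P X d i k ω * hatY P X e j l ω ∂P =
      if i = j then incR β φ d e k l /
        (Real.sqrt (incR β φ d d k k) * Real.sqrt (incR β φ e e l l)) else 0 := by
    intro i j d e k l
    have : ∀ ω, hatY P X d i k ω * hatY P X e j l ω =
      (Real.sqrt (incR β φ d d k k) * Real.sqrt (incR β φ e e l l))⁻¹ *
      ((X i (((k : ℝ) + 1) / d) ω - X i ((k : ℝ) / d) ω) *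
        (X j (((l : ℝ) + 1) / e) ω - X j ((l : ℝ) / e) ω)) := by
      intro ω
      simp only [hatY, hsq]
      rw [mul_inv]
      ring
    simp_rw [this]
    rw [integral_const_mul, hinc]
    split_ifs
    · ring
    · ring
  have hYn : ∀ (i j : Fin n) (d k : ℕ), 1 ≤ d → ∫ ω, hatY P X d i k ω * hatY P X d j k ω ∂P =
      if i = j then 1 else 0 := by
    intro i j d k hd
    rw [hYY]
    have h0 := hp k d hd
    rw [Real.mul_self_sqrt h0.le, div_self h0.ne']
  set δ : ℝ := if i = j then 1 else 0 with hδ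
  have hterm : ∀ d e k l : ℕ, 1 ≤ d → 1 ≤ e →
      Integrable (fun ω => (hatY P X d i k ω * hatY P X d j k ω - δ) *
        (hatY P X e i l ω * hatY P X e j l ω - δ)) P ∧
      ∫ ω, (hatY P X d i k ω * hatY P X d j k ω - δ) *
        (hatY P X e i l ω * hatY P X e j l ω - δ) ∂P =
      (if i = j then 2 else 1) *
        (incR β φ d e k l ^ 2 / (incR β φ d d k k * incR β φ e e l l)) := by
    intro d e k l hd he
    obtain ⟨w1, w2⟩ := wick4 V hV (hYV i d k) (hYV j d k) (hYV i e l) (hYV j e l)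
    have i1 := wick_int2 V hV (hYV i d k) (hYV j d k)
    have i2 := wick_int2 V hV (hYV i e l) (hYV j e l)
    have : ∀ ω, (hatY P X d i k ω * hatY P X d j k ω - δ) *
        (hatY P X e i l ω * hatY P X e j l ω - δ) =
        hatY P X d i k ω * hatY P X d j k ω * (hatY P X e i l ω * hatY P X e j l ω)
        - δ * (hatY P X d i k ω * hatY P X d j k ω) - δ * (hatY P X e i l ω * hatY P X e j l ω)
        + δ * δ := fun ω => by ring
    simp_rw [this]
    have j1 := i1.const_mul δ
    have j2 := i2.const_mul δ
    have j3 := w1.sub j1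
    have j4 := j3.sub j2
    refine ⟨j4.add (integrable_const _), ?_⟩
    erw [integral_add j4 (integrable_const _), integral_sub j3 j2, integral_sub w1 j1]
    rw [integral_const_mul, integral_const_mul, w2, hYn i j d k hd, hYn i j e l he,
      hYY i i, hYY j j, hYY i j, hYY j i]
    have h1 := hp k d hd
    have h2 := hp l e he
    have hr : (incR β φ d e k l /
        (Real.sqrt (incR β φ d d k k) * Real.sqrt (incR β φ e e l l))) *
        (incR β φ d e k l /
        (Real.sqrt (incR β φ d d k k) * Real.sqrt (incR β φ e e l l))) =
        incR β φ d e k l ^ 2 / (incR β φ d d k k * incR β φ e e l l) := by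
      rw [div_mul_div_comm]
      congr 1
      · ring
      · rw [mul_mul_mul_comm, Real.mul_self_sqrt h1.le, Real.mul_self_sqrt h2.le]
    simp only [if_true, integral_const, probReal_univ, smul_eq_mul]
    by_cases hij : i = j
    · simp only [hij, if_true, hδ, hr]; ring
    · have hji : ¬ j = i := fun h => hij h.symm
      simp only [hij, hji, if_false, hδ, hr]; ring
  intro d e hd he
  have hexp : ∀ ω, hatW P X α x d i j ω * hatW P X α x e i j ω =
      (d : ℝ) ^ (1 - α) * (e : ℝ) ^ (1 - α) * ∑ k ∈ Finset.Icc 1 ⌊(d : ℝ) * x⌋₊,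
      ∑ l ∈ Finset.Icc 1 ⌊(e : ℝ) * x⌋₊, (hatY P X d i k ω * hatY P X d j k ω - δ) *
        (hatY P X e i l ω * hatY P X e j l ω - δ) := by
    intro ω
    rw [← Finset.sum_mul_sum]
    simp only [hatW, ← hδ]
    ring
  simp_rw [hexp]
  constructor
  · exact (integrable_finset_sum _ fun k _ => integrable_finset_sum _ fun l _ =>
      (hterm d e k l hd he).1).const_mul _
  · rw [integral_const_mul, integral_finset_sum _ fun k _ => integrable_finset_sum _ fun l _ =>
      (hterm d e k l hd he).1]
    simp_rw [integral_finset_sum _ fun l _ => (hterm d e _ l hd he).1, (hterm d e _ _ hd he).2]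
    unfold Ssum
    simp_rw [← Finset.mul_sum]
    ring

end prob

section L2part
open Set Topology

def cel (d k : ℕ) : Set ℝ := Ioc ((k : ℝ) / d) (((k : ℝ) + 1) / d)
def bx (d e : ℕ) (q : ℕ × ℕ) : Set (ℝ × ℝ) := cel d q.1 ×ˢ cel e q.2
def TQ (x : ℝ) : Set (ℝ × ℝ) := Ioc 0 (x + 1) ×ˢ Ioc 0 (x + 1)
def idx (x : ℝ) (d e : ℕ) : Finset (ℕ × ℕ) :=
  Finset.Icc 1 ⌊(d : ℝ) * x⌋₊ ×ˢ Finset.Icc 1 ⌊(e : ℝ) * x⌋₊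
def Qf (x : ℝ) (d e : ℕ) (g : ℝ × ℝ → ℝ) : ℝ :=
  ∑ q ∈ idx x d e, (d : ℝ) * e * (∫ p in bx d e q, g p) ^ 2
def UU (x : ℝ) (d : ℕ) : Set ℝ := Ioc (1 / (d : ℝ)) (((⌊(d : ℝ) * x⌋₊ : ℝ) + 1) / d)

lemma cel_mem {d k : ℕ} (hd : 1 ≤ d) {s : ℝ} (hs : s ∈ cel d k) : ⌈(d : ℝ) * s⌉₊ = k + 1 := by
  have hd' : (0 : ℝ) < d := by exact_mod_cast hd
  obtain ⟨h1, h2⟩ := hs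
  rw [div_lt_iff₀ hd'] at h1
  rw [le_div_iff₀ hd'] at h2
  rw [Nat.ceil_eq_iff (by omega)]
  constructor
  · simpa [mul_comm] using h1
  · push_cast; linarith

lemma mem_cel {d : ℕ} (hd : 1 ≤ d) {s : ℝ} (hs : 0 < s) : s ∈ cel d (⌈(d : ℝ) * s⌉₊ - 1) := by
  have hd' : (0 : ℝ) < d := by exact_mod_cast hd
  have h0 : 0 < ⌈(d : ℝ) * s⌉₊ := Nat.ceil_pos.2 (by positivity)
  have h1 : ((⌈(d : ℝ) * s⌉₊ - 1 : ℕ) : ℝ) = (⌈(d : ℝ) * s⌉₊ : ℝ) - 1 := by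
    rw [Nat.cast_sub (by omega)]; simp
  constructor
  · rw [div_lt_iff₀ hd', h1]
    have := Nat.ceil_lt_add_one (a := (d : ℝ) * s) (by positivity)
    linarith
  · rw [le_div_iff₀ hd', h1]
    have := Nat.le_ceil ((d : ℝ) * s)
    linarith

lemma cel_sub {x : ℝ} (hx : 0 < x) {d k : ℕ} (hd : 1 ≤ d)
    (hk : k ∈ Finset.Icc 1 ⌊(d : ℝ) * x⌋₊) : cel d k ⊆ Ioc 0 (x + 1) := by
  have hd' : (0 : ℝ) < d := by exact_mod_cast hd
  have hd1 : (1 : ℝ) ≤ d := by exact_mod_cast hd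
  rw [Finset.mem_Icc] at hk
  have h3 : (k : ℝ) ≤ d * x := (Nat.le_floor_iff (by positivity)).1 hk.2
  rintro s ⟨h1, h2⟩
  refine ⟨lt_of_le_of_lt (by positivity) h1, h2.trans ?_⟩
  rw [div_le_iff₀ hd']
  nlinarith

lemma iUnion_cel {x : ℝ} {d : ℕ} (hd : 1 ≤ d) (s : ℝ) :
    s ∈ UU x d ↔ ∃ k ∈ Finset.Icc 1 ⌊(d : ℝ) * x⌋₊, s ∈ cel d k := by
  have hd' : (0 : ℝ) < d := by exact_mod_cast hd
  constructor
  · rintro ⟨h1, h2⟩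
    have hs : 0 < s := lt_trans (by positivity) h1
    refine ⟨_, ?_, mem_cel hd hs⟩
    rw [div_lt_iff₀ hd'] at h1
    rw [le_div_iff₀ hd'] at h2
    rw [Finset.mem_Icc]
    have a1 : 1 < ⌈(d : ℝ) * s⌉₊ := by rw [Nat.lt_ceil]; push_cast; linarith
    have a2 : ⌈(d : ℝ) * s⌉₊ ≤ ⌊(d : ℝ) * x⌋₊ + 1 := by rw [Nat.ceil_le]; push_cast; linarith
    omega
  · rintro ⟨k, hk, h1, h2⟩
    rw [Finset.mem_Icc] at hk
    have b1 : (1 : ℝ) ≤ k := by exact_mod_cast hk.1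
    have b2 : (k : ℝ) ≤ ⌊(d : ℝ) * x⌋₊ := by exact_mod_cast hk.2
    exact ⟨lt_of_le_of_lt (by gcongr) h1, h2.trans (by gcongr)⟩

lemma bx_meas (d e : ℕ) (q : ℕ × ℕ) : MeasurableSet (bx d e q) :=
  measurableSet_Ioc.prod measurableSet_Ioc

lemma bx_vol {d e : ℕ} (hd : 1 ≤ d) (he : 1 ≤ e) (q : ℕ × ℕ) :
    volume.real (bx d e q) = 1 / ((d : ℝ) * e) := by
  have hd' : (0 : ℝ) < d := by exact_mod_cast hd
  have he' : (0 : ℝ) < e := by exact_mod_cast he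
  unfold bx cel
  rw [Measure.volume_eq_prod, measureReal_prod_prod, Real.volume_real_Ioc, Real.volume_real_Ioc,
    max_eq_left, max_eq_left]
  · field_simp; ring
  · rw [← sub_div]; simp
  · rw [← sub_div]; simp

lemma bx_fin (d e : ℕ) (q : ℕ × ℕ) : volume (bx d e q) < ⊤ := by
  unfold bx cel
  rw [Measure.volume_eq_prod, Measure.prod_prod]
  exact ENNReal.mul_lt_top measure_Ioc_lt_top measure_Ioc_lt_top

lemma TQ_fin (x : ℝ) : volume (TQ x) < ⊤ := by
  unfold TQ
  rw [Measure.volume_eq_prod, Measure.prod_prod]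
  exact ENNReal.mul_lt_top measure_Ioc_lt_top measure_Ioc_lt_top

instance TQ_inst (x : ℝ) : IsFiniteMeasure (volume.restrict (TQ x)) := ⟨by
  rw [Measure.restrict_apply_univ]; exact TQ_fin x⟩

lemma bx_sub {x : ℝ} (hx : 0 < x) {d e : ℕ} (hd : 1 ≤ d) (he : 1 ≤ e) {q : ℕ × ℕ}
    (hq : q ∈ idx x d e) : bx d e q ⊆ TQ x := by
  unfold idx at hq
  rw [Finset.mem_product] at hq
  exact prod_mono (cel_sub hx hd hq.1) (cel_sub hx he hq.2)

lemma bx_union {x : ℝ} {d e : ℕ} (hd : 1 ≤ d) (he : 1 ≤ e) :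
    (⋃ q ∈ idx x d e, bx d e q) = UU x d ×ˢ UU x e := by
  ext ⟨s, t⟩
  simp only [mem_iUnion, mem_prod, iUnion_cel hd, iUnion_cel he, idx, Finset.mem_product, bx]
  constructor
  · rintro ⟨q, ⟨h1, h2⟩, h3, h4⟩
    exact ⟨⟨_, h1, h3⟩, ⟨_, h2, h4⟩⟩
  · rintro ⟨⟨k, h1, h3⟩, ⟨l, h2, h4⟩⟩
    exact ⟨(k, l), ⟨h1, h2⟩, h3, h4⟩

lemma UU_sub {x : ℝ} (hx : 0 < x) {d e : ℕ} (hd : 1 ≤ d) (he : 1 ≤ e) :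
    UU x d ×ˢ UU x e ⊆ TQ x := by
  rw [← bx_union hd he]
  exact iUnion₂_subset fun q hq => bx_sub hx hd he hq

lemma bx_disj {d e : ℕ} (hd : 1 ≤ d) (he : 1 ≤ e) {q q' : ℕ × ℕ} (h : q ≠ q') :
    Disjoint (bx d e q) (bx d e q') := by
  rw [Set.disjoint_left]
  rintro ⟨s, t⟩ ⟨h1, h2⟩ ⟨h3, h4⟩
  apply h
  have a1 := cel_mem hd h1
  have a2 := cel_mem he h2
  have a3 := cel_mem hd h3
  have a4 := cel_mem he h4
  ext <;> omega

lemma sum_bx {x : ℝ} (hx : 0 < x) {d e : ℕ} (hd : 1 ≤ d) (he : 1 ≤ e) {h : ℝ × ℝ → ℝ}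
    (hh : IntegrableOn h (TQ x)) :
    ∑ q ∈ idx x d e, ∫ p in bx d e q, h p = ∫ p in UU x d ×ˢ UU x e, h p := by
  rw [← bx_union hd he, integral_biUnion_finset]
  · exact fun q _ => bx_meas d e q
  · exact fun q _ q' _ hne => bx_disj hd he hne
  · exact fun q hq => hh.mono_set (bx_sub hx hd he hq)

lemma sq_sub_const {ν : Measure (ℝ × ℝ)} [IsFiniteMeasure ν] {g : ℝ × ℝ → ℝ}
    (hg : MemLp g 2 ν) (c : ℝ) :
    ∫ p, (g p - c) ^ 2 ∂ν = ∫ p, g p ^ 2 ∂ν - 2 * c * ∫ p, g p ∂ν + c ^ 2 * ν.real univ := by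
  have h1 := hg.integrable_sq
  have h2 := (hg.integrable (by norm_num)).const_mul (2 * c)
  have : ∀ p, (g p - c) ^ 2 = g p ^ 2 - 2 * c * g p + c ^ 2 := fun p => by ring
  simp_rw [this]
  have h3 := h1.sub h2
  erw [integral_add h3 (integrable_const _), integral_sub h1 h2]
  rw [integral_const_mul, integral_const, smul_eq_mul]
  ring

lemma jensen_bx {d e : ℕ} (hd : 1 ≤ d) (he : 1 ≤ e) (q : ℕ × ℕ) {g : ℝ × ℝ → ℝ}
    (hg : MemLp g 2 (volume.restrict (bx d e q))) (c : ℝ) :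
    (d : ℝ) * e * (∫ p in bx d e q, g p) ^ 2 ≤ ∫ p in bx d e q, g p ^ 2 ∧
    (∫ p in bx d e q, g p ^ 2) - (d : ℝ) * e * (∫ p in bx d e q, g p) ^ 2 ≤
      ∫ p in bx d e q, (g p - c) ^ 2 := by
  have hd' : (0 : ℝ) < d := by exact_mod_cast hd
  have he' : (0 : ℝ) < e := by exact_mod_cast he
  have : IsFiniteMeasure (volume.restrict (bx d e q)) := ⟨by
    rw [Measure.restrict_apply_univ]; exact bx_fin d e q⟩
  have hv : (volume.restrict (bx d e q)).real univ = 1 / ((d : ℝ) * e) := by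
    rw [measureReal_restrict_apply MeasurableSet.univ, univ_inter, bx_vol hd he]
  have key := sq_sub_const hg
  set I := ∫ p in bx d e q, g p
  set J := ∫ p in bx d e q, g p ^ 2
  simp only [hv] at key
  have hde : (0 : ℝ) < d * e := by positivity
  constructor
  · have h := key ((d : ℝ) * e * I)
    have h0 : 0 ≤ ∫ p in bx d e q, (g p - (d : ℝ) * e * I) ^ 2 :=
      integral_nonneg fun p => sq_nonneg _
    rw [h] at h0
    have : ((d : ℝ) * e * I) ^ 2 * (1 / ((d : ℝ) * e)) = (d : ℝ) * e * I ^ 2 := by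
      field_simp
    rw [this] at h0
    nlinarith
  · rw [key c]
    have : c ^ 2 * (1 / ((d : ℝ) * e)) - 2 * c * I + (d : ℝ) * e * I ^ 2 =
      (1 / ((d : ℝ) * e)) * (c - d * e * I) ^ 2 := by field_simp; ring
    have h2 : 0 ≤ (1 / ((d : ℝ) * e)) * (c - d * e * I) ^ 2 := by positivity
    linarith

lemma memLp_bx {x : ℝ} (hx : 0 < x) {d e : ℕ} (hd : 1 ≤ d) (he : 1 ≤ e) {q : ℕ × ℕ}
    (hq : q ∈ idx x d e) {g : ℝ × ℝ → ℝ} (hg : MemLp g 2 (volume.restrict (TQ x))) :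
    MemLp g 2 (volume.restrict (bx d e q)) :=
  hg.mono_measure (Measure.restrict_mono (bx_sub hx hd he hq) le_rfl)

lemma Qf_le {x : ℝ} (hx : 0 < x) {d e : ℕ} (hd : 1 ≤ d) (he : 1 ≤ e) {g : ℝ × ℝ → ℝ}
    (hg : MemLp g 2 (volume.restrict (TQ x))) : Qf x d e g ≤ ∫ p in TQ x, g p ^ 2 := by
  calc Qf x d e g ≤ ∑ q ∈ idx x d e, ∫ p in bx d e q, g p ^ 2 :=
        Finset.sum_le_sum fun q hq => (jensen_bx hd he q (memLp_bx hx hd he hq hg) 0).1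
    _ = ∫ p in UU x d ×ˢ UU x e, g p ^ 2 := sum_bx hx hd he hg.integrable_sq
    _ ≤ ∫ p in TQ x, g p ^ 2 := setIntegral_mono_set hg.integrable_sq
        (Eventually.of_forall fun p => sq_nonneg _) (UU_sub hx hd he).eventuallyLE

lemma abs_sq_sub (η a b : ℝ) (hη : 0 < η) :
    |a ^ 2 - b ^ 2| ≤ (1 + 1 / η) * (a - b) ^ 2 + η * b ^ 2 := by
  have h : 0 ≤ 1 / η * ((a - b) - η * b) ^ 2 := by positivity
  have h' : 0 ≤ 1 / η * ((a - b) + η * b) ^ 2 := by positivity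
  have e1 : 1 / η * ((a - b) - η * b) ^ 2 = 1 / η * (a - b) ^ 2 - 2 * b * (a - b) + η * b ^ 2 := by
    field_simp; ring
  have e2 : 1 / η * ((a - b) + η * b) ^ 2 = 1 / η * (a - b) ^ 2 + 2 * b * (a - b) + η * b ^ 2 := by
    field_simp; ring
  rw [e1] at h
  rw [e2] at h'
  rw [abs_le]
  constructor <;> nlinarith [sq_nonneg (a - b)]

lemma Qf_diff {x : ℝ} (hx : 0 < x) {d e : ℕ} (hd : 1 ≤ d) (he : 1 ≤ e) {g f : ℝ × ℝ → ℝ}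
    (hg : MemLp g 2 (volume.restrict (TQ x))) (hf : MemLp f 2 (volume.restrict (TQ x)))
    {η : ℝ} (hη : 0 < η) :
    |Qf x d e g - Qf x d e f| ≤ (1 + 1 / η) * (∫ p in TQ x, (g p - f p) ^ 2) +
      η * ∫ p in TQ x, f p ^ 2 := by
  have hd' : (0 : ℝ) < d := by exact_mod_cast hd
  have he' : (0 : ℝ) < e := by exact_mod_cast he
  have h1 := Qf_le hx hd he (hg.sub hf)
  have h2 := Qf_le hx hd he hf
  have h3 : |Qf x d e g - Qf x d e f| ≤ (1 + 1 / η) * Qf x d e (g - f) + η * Qf x d e f := by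
    unfold Qf
    rw [← Finset.sum_sub_distrib, Finset.mul_sum, Finset.mul_sum, ← Finset.sum_add_distrib]
    refine (Finset.abs_sum_le_sum_abs _ _).trans (Finset.sum_le_sum fun q hq => ?_)
    have : IsFiniteMeasure (volume.restrict (bx d e q)) := ⟨by
      rw [Measure.restrict_apply_univ]; exact bx_fin d e q⟩
    have i1 := (memLp_bx hx hd he hq hg).integrable (by norm_num)
    have i2 := (memLp_bx hx hd he hq hf).integrable (by norm_num)
    have : ∫ p in bx d e q, (g - f) p = (∫ p in bx d e q, g p) - ∫ p in bx d e q, f p :=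
      integral_sub i1 i2
    rw [this, ← mul_sub, abs_mul, abs_of_pos (by positivity)]
    have := abs_sq_sub η (∫ p in bx d e q, g p) (∫ p in bx d e q, f p) hη
    have hde : (0 : ℝ) < d * e := by positivity
    nlinarith [mul_le_mul_of_nonneg_left this hde.le]
  refine h3.trans ?_
  simp only [Pi.sub_apply] at h1
  gcongr

lemma If_diff {x : ℝ} (hx : 0 < x) {g f : ℝ × ℝ → ℝ}
    (hg : MemLp g 2 (volume.restrict (TQ x))) (hf : MemLp f 2 (volume.restrict (TQ x)))
    {η : ℝ} (hη : 0 < η) :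
    |(∫ p in Ioc 0 x ×ˢ Ioc 0 x, g p ^ 2) - ∫ p in Ioc 0 x ×ˢ Ioc 0 x, f p ^ 2| ≤
      (1 + 1 / η) * (∫ p in TQ x, (g p - f p) ^ 2) + η * ∫ p in TQ x, f p ^ 2 := by
  have hsub : Ioc 0 x ×ˢ Ioc 0 x ⊆ TQ x :=
    prod_mono (Ioc_subset_Ioc_right (by linarith)) (Ioc_subset_Ioc_right (by linarith))
  have i1 : IntegrableOn (fun p => g p ^ 2) (TQ x) := hg.integrable_sq
  have i2 : IntegrableOn (fun p => f p ^ 2) (TQ x) := hf.integrable_sq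
  have i3 : IntegrableOn (fun p => (g p - f p) ^ 2) (TQ x) := (hg.sub hf).integrable_sq
  have i4 : IntegrableOn (fun p => (1 + 1 / η) * (g p - f p) ^ 2 + η * f p ^ 2) (TQ x) :=
    (i3.const_mul _).add (i2.const_mul _)
  rw [← integral_sub (i1.mono_set hsub) (i2.mono_set hsub), ← integral_const_mul,
    ← integral_const_mul, ← integral_add (i3.const_mul _) (i2.const_mul _)]
  refine (abs_integral_le_integral_abs).trans ?_
  refine (integral_mono (((i1.mono_set hsub).sub (i2.mono_set hsub)).abs) (i4.mono_set hsub)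
    (fun p => abs_sq_sub η (g p) (f p) hη)).trans ?_
  exact setIntegral_mono_set i4 (Eventually.of_forall fun p => by
    simp only [Pi.zero_apply]; positivity) hsub.eventuallyLE

lemma tendsto_UU {x : ℝ} (hx : 0 < x) {h : ℝ × ℝ → ℝ} (hh : IntegrableOn h (TQ x)) :
    Tendsto (fun q : ℕ × ℕ => ∫ p in UU x q.1 ×ˢ UU x q.2, h p) atTop
      (𝓝 (∫ p in Ioc 0 x ×ˢ Ioc 0 x, h p)) := by
  have hsub : Ioc 0 x ×ˢ Ioc 0 x ⊆ TQ x :=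
    prod_mono (Ioc_subset_Ioc_right (by linarith)) (Ioc_subset_Ioc_right (by linarith))
  have hUm : ∀ d e, MeasurableSet (UU x d ×ˢ UU x e) :=
    fun d e => measurableSet_Ioc.prod measurableSet_Ioc
  have hIm : MeasurableSet (Ioc 0 x ×ˢ Ioc 0 x) := measurableSet_Ioc.prod measurableSet_Ioc
  have e1 : ∀ A : Set (ℝ × ℝ), MeasurableSet A → A ⊆ TQ x →
      ∫ p in A, h p = ∫ p in TQ x, A.indicator h p := by
    intro A hA hs
    rw [setIntegral_indicator hA, inter_eq_self_of_subset_right hs]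
  have ht1 : Tendsto (fun q : ℕ × ℕ => q.1) atTop atTop := by
    rw [← prod_atTop_atTop_eq]; exact tendsto_fst
  have ht2 : Tendsto (fun q : ℕ × ℕ => q.2) atTop atTop := by
    rw [← prod_atTop_atTop_eq]; exact tendsto_snd
  have hev : ∀ s : ℝ, 0 < s → ∀ᶠ d : ℕ in atTop, (s ∈ UU x d ↔ s ∈ Ioc 0 x) := by
    intro s hs
    have hinv : Tendsto (fun d : ℕ => 1 / (d : ℝ)) atTop (𝓝 0) := tendsto_one_div_atTop_nhds_zero_nat
    by_cases hsx : s ≤ x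
    · filter_upwards [hinv.eventually (gt_mem_nhds hs), eventually_ge_atTop 1] with d hd hd1
      have hd' : (0 : ℝ) < d := by exact_mod_cast hd1
      refine iff_of_true ⟨hd, ?_⟩ ⟨hs, hsx⟩
      rw [le_div_iff₀ hd']
      have := Nat.lt_floor_add_one ((d : ℝ) * x)
      nlinarith
    · push Not at hsx
      filter_upwards [hinv.eventually (gt_mem_nhds (sub_pos.2 hsx)), eventually_ge_atTop 1] with d hd hd1
      have hd' : (0 : ℝ) < d := by exact_mod_cast hd1
      refine iff_of_false (fun hc => ?_) (fun hc => absurd hc.2 (not_le.2 hsx))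
      have h2 := hc.2
      have h3 := Nat.floor_le (a := (d : ℝ) * x) (by positivity)
      rw [div_lt_iff₀ hd'] at hd
      rw [le_div_iff₀ hd'] at h2
      nlinarith
  rw [e1 _ hIm hsub]
  have hcongr : (fun q : ℕ × ℕ => ∫ p in UU x q.1 ×ˢ UU x q.2, h p) =ᶠ[atTop]
      fun q => ∫ p in TQ x, (UU x q.1 ×ˢ UU x q.2).indicator h p := by
    filter_upwards [ht1.eventually (eventually_ge_atTop 1), ht2.eventually (eventually_ge_atTop 1)]
      with q h1 h2
    exact e1 _ (hUm _ _) (UU_sub hx h1 h2)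
  refine Tendsto.congr' hcongr.symm ?_
  refine tendsto_integral_filter_of_dominated_convergence (fun p => ‖h p‖) ?_ ?_ hh.norm ?_
  · exact Eventually.of_forall fun q => hh.aestronglyMeasurable.indicator (hUm _ _)
  · exact Eventually.of_forall fun q => Eventually.of_forall fun p => norm_indicator_le_norm_self _ _
  · filter_upwards [ae_restrict_mem (measurableSet_Ioc.prod measurableSet_Ioc)] with p hp
    have hp1 := ht1.eventually (hev p.1 hp.1.1)
    have hp2 := ht2.eventually (hev p.2 hp.2.1)
    refine tendsto_const_nhds.congr' ?_
    filter_upwards [hp1, hp2] with q h1 h2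
    have : p ∈ UU x q.1 ×ˢ UU x q.2 ↔ p ∈ Ioc 0 x ×ˢ Ioc 0 x := by
      rw [mem_prod, mem_prod, h1, h2]
    by_cases hm : p ∈ Ioc 0 x ×ˢ Ioc 0 x
    · rw [indicator_of_mem hm, indicator_of_mem (this.2 hm)]
    · rw [indicator_of_notMem hm, indicator_of_notMem (fun hc => hm (this.1 hc))]

lemma Qf_cont {x : ℝ} (hx : 0 < x) {g : ℝ × ℝ → ℝ} (hg : UniformContinuous g)
    (hgL : MemLp g 2 (volume.restrict (TQ x))) :
    Tendsto (fun q : ℕ × ℕ => Qf x q.1 q.2 g) atTop (𝓝 (∫ p in Ioc 0 x ×ˢ Ioc 0 x, g p ^ 2)) := by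
  have ht1 : Tendsto (fun q : ℕ × ℕ => q.1) atTop atTop := by
    rw [← prod_atTop_atTop_eq]; exact tendsto_fst
  have ht2 : Tendsto (fun q : ℕ × ℕ => q.2) atTop atTop := by
    rw [← prod_atTop_atTop_eq]; exact tendsto_snd
  have hU := tendsto_UU hx (h := fun p => g p ^ 2) hgL.integrable_sq
  suffices hdiff : Tendsto (fun q : ℕ × ℕ => (∫ p in UU x q.1 ×ˢ UU x q.2, g p ^ 2) -
      Qf x q.1 q.2 g) atTop (𝓝 0) by
    have := hU.sub hdiff
    simpa using this
  rw [Metric.tendsto_nhds]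
  intro ε hε
  set V := volume.real (TQ x)
  have hV : 0 ≤ V := measureReal_nonneg
  set w := Real.sqrt (ε / (V + 1)) / 2
  have hw : 0 < w := by positivity
  have hw2 : w ^ 2 * V < ε := by
    have : w ^ 2 = ε / (V + 1) / 4 := by
      simp only [w, div_pow]; rw [Real.sq_sqrt (by positivity)]; norm_num
    rw [this]
    have h1 : ε / (V + 1) / 4 * V = ε * (V / (4 * (V + 1))) := by field_simp
    rw [h1]
    have h2 : V / (4 * (V + 1)) < 1 := by rw [div_lt_one (by positivity)]; linarith
    nlinarith
  obtain ⟨δ, hδ, hgδ⟩ := Metric.uniformContinuous_iff.1 hg w hw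
  have hinv : Tendsto (fun d : ℕ => 1 / (d : ℝ)) atTop (𝓝 0) := tendsto_one_div_atTop_nhds_zero_nat
  filter_upwards [ht1.eventually (eventually_ge_atTop 1), ht2.eventually (eventually_ge_atTop 1),
    ht1.eventually (hinv.eventually (gt_mem_nhds hδ)),
    ht2.eventually (hinv.eventually (gt_mem_nhds hδ))] with q hd he hd2 he2
  obtain ⟨d, e⟩ := q
  simp only at hd he hd2 he2 ⊢
  have hd' : (0 : ℝ) < d := by exact_mod_cast hd
  have he' : (0 : ℝ) < e := by exact_mod_cast he
  rw [← sum_bx hx hd he hgL.integrable_sq]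
  unfold Qf
  rw [← Finset.sum_sub_distrib, Real.dist_eq, sub_zero]
  have hcel : ∀ {d k : ℕ}, (0 : ℝ) < d → 1 / (d : ℝ) < δ → ∀ s ∈ cel d k,
      dist s (((k : ℝ) + 1) / d) < δ := by
    intro d k hd' hd2 s hs
    obtain ⟨h1, h2⟩ := hs
    rw [add_div] at h2 ⊢
    rw [Real.dist_eq, abs_lt]
    constructor <;> linarith
  have hb : ∀ r ∈ idx x d e, |(∫ p in bx d e r, g p ^ 2) -
      (d : ℝ) * e * (∫ p in bx d e r, g p) ^ 2| ≤ w ^ 2 * volume.real (bx d e r) := by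
    intro r hr
    set c := g (((r.1 : ℝ) + 1) / d, ((r.2 : ℝ) + 1) / e)
    obtain ⟨j1, j2⟩ := jensen_bx hd he r (memLp_bx hx hd he hr hgL) c
    rw [abs_of_nonneg (by linarith)]
    refine j2.trans ((le_abs_self _).trans ?_)
    rw [← Real.norm_eq_abs]
    refine norm_setIntegral_le_of_norm_le_const (bx_fin d e r) (fun p hp => ?_)
    rw [Real.norm_eq_abs, abs_pow]
    have : dist (g p) c < w := by
      apply hgδ
      rw [Prod.dist_eq]
      exact max_lt (hcel hd' hd2 _ hp.1) (hcel he' he2 _ hp.2)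
    rw [Real.dist_eq] at this
    gcongr
  refine ((Finset.abs_sum_le_sum_abs _ _).trans (Finset.sum_le_sum hb)).trans_lt ?_
  rw [← Finset.mul_sum]
  refine lt_of_le_of_lt ?_ hw2
  gcongr
  have h1 := sum_bx hx hd he (h := fun _ => (1 : ℝ)) (integrable_const _)
  simp only [integral_const, smul_eq_mul, mul_one, measureReal_restrict_apply MeasurableSet.univ,
    univ_inter] at h1
  rw [h1]
  exact measureReal_mono (UU_sub hx hd he) (TQ_fin x).ne

lemma Qf_main {x : ℝ} (hx : 0 < x) {f : ℝ × ℝ → ℝ} {F : ℕ → ℕ → ℝ × ℝ → ℝ}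
    (hf : MemLp f 2 (volume.restrict (TQ x)))
    (hF : ∀ d e, 1 ≤ d → 1 ≤ e → MemLp (F d e) 2 (volume.restrict (TQ x)))
    (hlim : Tendsto (fun q : ℕ × ℕ => ∫ p in TQ x, (F q.1 q.2 p - f p) ^ 2) atTop (𝓝 0)) :
    Tendsto (fun q : ℕ × ℕ => Qf x q.1 q.2 (F q.1 q.2)) atTop
      (𝓝 (∫ p in Ioc 0 x ×ˢ Ioc 0 x, f p ^ 2)) := by
  have ht1 : Tendsto (fun q : ℕ × ℕ => q.1) atTop atTop := by
    rw [← prod_atTop_atTop_eq]; exact tendsto_fst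
  have ht2 : Tendsto (fun q : ℕ × ℕ => q.2) atTop atTop := by
    rw [← prod_atTop_atTop_eq]; exact tendsto_snd
  rw [Metric.tendsto_nhds]
  intro ε hε
  set N := ∫ p in TQ x, f p ^ 2 with hN
  have hN0 : 0 ≤ N := integral_nonneg fun p => sq_nonneg _
  set η := ε / (12 * (N + 1)) with hη'
  have hη : 0 < η := by positivity
  have hηN : 3 * (η * N) < ε / 4 := by
    have : 3 * (η * N) = ε / 4 * (N / (N + 1)) := by rw [hη']; field_simp; ring
    rw [this]
    have h2 : N / (N + 1) < 1 := by rw [div_lt_one (by positivity)]; linarith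
    nlinarith
  set K := 1 + 1 / η
  have hK : 0 < K := by positivity
  set τ := ε / (8 * K)
  have hτ : 0 < τ := by positivity
  have hKτ : K * τ = ε / 8 := by simp only [τ]; field_simp
  obtain ⟨g, hgs, hgε, hgc, hgL⟩ := hf.exists_hasCompactSupport_eLpNorm_sub_le (by norm_num)
    (ε := ENNReal.ofReal (Real.sqrt τ)) (by simpa using hτ)
  have hgu : UniformContinuous g := hgc.uniformContinuous_of_tendsto_cocompact
    hgs.is_zero_at_infty
  have hfg : ∫ p in TQ x, (g p - f p) ^ 2 ≤ τ := by
    have h1 := hf.sub hgL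
    have h2 := h1.eLpNorm_eq_integral_rpow_norm (by norm_num) (by norm_num)
    rw [h2, ENNReal.ofReal_le_ofReal_iff (by positivity)] at hgε
    simp only [ENNReal.toReal_ofNat, Pi.sub_apply, Real.norm_eq_abs, Real.rpow_two, sq_abs] at hgε
    rw [← one_div, ← Real.sqrt_eq_rpow, Real.sqrt_le_sqrt_iff hτ.le] at hgε
    refine le_trans (le_of_eq ?_) hgε
    congr 1; ext p; ring
  filter_upwards [ht1.eventually (eventually_ge_atTop 1), ht2.eventually (eventually_ge_atTop 1),
    hlim.eventually (gt_mem_nhds hτ),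
    (Metric.tendsto_nhds.1 (Qf_cont hx hgu hgL)) (ε / 4) (by positivity)] with q hd he h3 h4
  have a1 := Qf_diff hx hd he (hF _ _ hd he) hf hη
  have a2 := Qf_diff hx hd he hgL hf hη
  have a3 := If_diff hx hgL hf hη
  rw [Real.dist_eq] at h4 ⊢
  have b1 : K * (∫ p in TQ x, (F q.1 q.2 p - f p) ^ 2) ≤ K * τ := by gcongr
  have b2 : K * (∫ p in TQ x, (g p - f p) ^ 2) ≤ K * τ := by gcongr
  rw [abs_le] at a1 a2 a3
  rw [abs_lt] at h4 ⊢
  constructor <;> linarith [a1.1, a1.2, a2.1, a2.2, a3.1, a3.2, h4.1, h4.2]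

end L2part

section anal
open Set Topology

structure Good (β α C : ℝ) (f f1 f2 : ℝ → ℝ) : Prop where
  hβ : 0 < β
  hα1 : 3 / 2 < α
  hα2 : α < 2
  hαβ : α ≤ 2 * β
  hC : 0 ≤ C
  hd1 : ∀ y, 1 ≤ y → HasDerivAt f (f1 y) y
  hc1 : ∀ y, 1 ≤ y → ContinuousAt f1 y
  hd2 : ∀ y, 1 < y → HasDerivAt f1 (f2 y) y
  h1 : f1 1 = β * f 1
  hg : ∀ y, 1 < y → |(2 * β - 1) * f1 y - y * f2 y| ≤ C * (y - 1) ^ (α - 2)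
  hm1 : Measurable f1
  hm2 : Measurable f2

lemma good_of_hyp {β lam α ν : ℝ} {φ ψ : ℝ → ℝ} (hyp : SelfSimilarHyp β lam α ν φ ψ)
    (hα1 : 3 / 2 < α) (hα2 : α < 2) :
    ∃ C, Good β α C (fun y => -lam * (y - 1) ^ α + ψ y)
      (fun y => -lam * (α * (y - 1) ^ (α - 1)) + deriv ψ y)
      (fun y => -lam * (α * ((α - 1) * (y - 1) ^ (α - 2))) + deriv (deriv ψ) y) := by
  obtain ⟨⟨hβ0, hβ1⟩, hlam, ⟨hα0, hαβ⟩, hν, hφ, ⟨S, hSo, hS, hψ⟩, ⟨C₀, hC0, hψ1, hψ2⟩, hψ11,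
    ⟨C₁, hC1, hφ2⟩⟩ := hyp
  have hD1 : ∀ y, 1 ≤ y → HasDerivAt (fun y => -lam * (y - 1) ^ α + ψ y)
      (-lam * (α * (y - 1) ^ (α - 1)) + deriv ψ y) y := by
    intro y hy
    have h1 : HasDerivAt (fun y : ℝ => (y - 1) ^ α) (α * (y - 1) ^ (α - 1)) y := by
      have := ((hasDerivAt_id y).sub_const 1).rpow_const (p := α) (Or.inr (by linarith))
      simpa using this
    exact (h1.const_mul (-lam)).fun_add (hψ y (hS hy)).1.hasDerivAt
  have hD2 : ∀ y, 1 < y → HasDerivAt (fun y => -lam * (α * (y - 1) ^ (α - 1)) + deriv ψ y)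
      (-lam * (α * ((α - 1) * (y - 1) ^ (α - 2))) + deriv (deriv ψ) y) y := by
    intro y hy
    have h1 : HasDerivAt (fun y : ℝ => (y - 1) ^ (α - 1)) ((α - 1) * (y - 1) ^ (α - 2)) y := by
      have := ((hasDerivAt_id y).sub_const 1).rpow_const (p := α - 1)
        (Or.inl (by simp only [id]; linarith))
      have e : α - 1 - 1 = α - 2 := by ring
      rw [e] at this
      simpa using this
    exact ((h1.const_mul α).const_mul (-lam)).fun_add (hψ y (hS hy.le)).2.hasDerivAt
  have hφd : ∀ y, 1 < y → deriv φ y = -lam * (α * (y - 1) ^ (α - 1)) + deriv ψ y := by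
    intro y hy
    have : φ =ᶠ[𝓝 y] fun y => -lam * (y - 1) ^ α + ψ y := by
      filter_upwards [lt_mem_nhds hy] with z hz using hφ z hz.le
    rw [this.deriv_eq, (hD1 y hy.le).deriv]
  have hφdd : ∀ y, 1 < y → deriv (deriv φ) y =
      -lam * (α * ((α - 1) * (y - 1) ^ (α - 2))) + deriv (deriv ψ) y := by
    intro y hy
    have : deriv φ =ᶠ[𝓝 y] fun y => -lam * (α * (y - 1) ^ (α - 1)) + deriv ψ y := by
      filter_upwards [lt_mem_nhds hy] with z hz using hφd z hz
    rw [this.deriv_eq, (hD2 y hy).deriv]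
  have hb : |2 * β - 1| ≤ 1 := by rw [abs_le]; constructor <;> linarith
  set Ca := (lam * α + C₀ * 2) + 2 * (lam * α * (α - 1)) + C₀
  have hCa : 0 ≤ Ca := by
    have : 0 ≤ α - 1 := by linarith
    positivity
  refine ⟨Ca + 3 * C₁, hβ0, hα1, hα2, hαβ, by positivity, hD1, ?_, hD2, ?_, ?_, ?_, ?_⟩
  · intro y hy
    have h1 : ContinuousAt (fun y : ℝ => (y - 1) ^ (α - 1)) y :=
      (continuousAt_id.sub continuousAt_const).rpow_const (Or.inr (by linarith))
    exact ((h1.const_mul α).const_mul (-lam)).add (hψ y (hS hy)).2.continuousAt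
  · have h1 : (0:ℝ) ^ (α - 1) = 0 := Real.zero_rpow (by linarith)
    have h2 : (0:ℝ) ^ α = 0 := Real.zero_rpow (by linarith)
    simp only [sub_self, h1, h2, mul_zero, zero_add]
    exact hψ11 (by linarith)
  · intro y hy
    have hy1 : 0 < y - 1 := by linarith
    have hpos : 0 < (y - 1) ^ (α - 2) := Real.rpow_pos_of_pos hy1 _
    by_cases hy2 : y ≤ 2
    · -- near one
      have q1 : (1:ℝ) ≤ (y - 1) ^ (α - 2) :=
        Real.one_le_rpow_of_pos_of_le_one_of_nonpos hy1 (by linarith) (by linarith)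
      have q2 : (y - 1) ^ (α - 1) ≤ 1 := Real.rpow_le_one hy1.le (by linarith) (by linarith)
      have q2' : 0 ≤ (y - 1) ^ (α - 1) := by positivity
      have q3 : y ^ (α - 1) ≤ 2 := by
        calc y ^ (α - 1) ≤ 2 ^ (α - 1) := Real.rpow_le_rpow (by linarith) hy2 (by linarith)
          _ ≤ 2 ^ (1 : ℝ) := Real.rpow_le_rpow_of_exponent_le (by norm_num) (by linarith)
          _ = 2 := by norm_num
      have e1 := hψ1 y hy
      have e2 := hψ2 y hy
      have b1 : |-lam * (α * (y - 1) ^ (α - 1)) + deriv ψ y| ≤ lam * α + C₀ * 2 := by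
        refine (abs_add_le _ _).trans (add_le_add ?_ (e1.trans (by gcongr)))
        rw [abs_mul, abs_neg, abs_of_pos hlam, abs_of_nonneg (by positivity)]
        have : lam * (α * (y - 1) ^ (α - 1)) ≤ lam * (α * 1) := by gcongr
        linarith
      have b2 : |y * (-lam * (α * ((α - 1) * (y - 1) ^ (α - 2))) + deriv (deriv ψ) y)| ≤
          2 * (lam * α * (α - 1)) * (y - 1) ^ (α - 2) + C₀ := by
        rw [abs_mul, abs_of_pos (by linarith : 0 < y)]
        have c1 : |-lam * (α * ((α - 1) * (y - 1) ^ (α - 2))) + deriv (deriv ψ) y| ≤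
            lam * α * (α - 1) * (y - 1) ^ (α - 2) + C₀ * y⁻¹ * 1 := by
          refine (abs_add_le _ _).trans (add_le_add ?_ (e2.trans ?_))
          · have : 0 ≤ α - 1 := by linarith
            rw [abs_mul, abs_neg, abs_of_pos hlam, abs_of_nonneg (by positivity)]
            apply le_of_eq; ring
          · have : 0 < y := by linarith
            gcongr
        have hα' : 0 ≤ lam * α * (α - 1) * (y - 1) ^ (α - 2) := by
          have : 0 ≤ α - 1 := by linarith
          positivity
        calc _ ≤ y * (lam * α * (α - 1) * (y - 1) ^ (α - 2) + C₀ * y⁻¹ * 1) :=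
              mul_le_mul_of_nonneg_left c1 (by linarith)
          _ = y * (lam * α * (α - 1) * (y - 1) ^ (α - 2)) + C₀ := by
              have : y ≠ 0 := by linarith
              field_simp
          _ ≤ _ := by nlinarith
      calc _ ≤ |(2 * β - 1) * (-lam * (α * (y - 1) ^ (α - 1)) + deriv ψ y)| +
            |y * (-lam * (α * ((α - 1) * (y - 1) ^ (α - 2))) + deriv (deriv ψ) y)| := abs_sub _ _
        _ ≤ (lam * α + C₀ * 2) + (2 * (lam * α * (α - 1)) * (y - 1) ^ (α - 2) + C₀) := by
            refine add_le_add ?_ b2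
            rw [abs_mul]
            calc _ ≤ 1 * (lam * α + C₀ * 2) := mul_le_mul hb b1 (abs_nonneg _) (by norm_num)
              _ = _ := one_mul _
        _ ≤ (lam * α + C₀ * 2) * (y - 1) ^ (α - 2) + (2 * (lam * α * (α - 1)) * (y - 1) ^ (α - 2)
            + C₀ * (y - 1) ^ (α - 2)) := by
            have u1 : 0 ≤ lam * α + C₀ * 2 := by positivity
            nlinarith
        _ = Ca * (y - 1) ^ (α - 2) := by ring
        _ ≤ _ := by
            apply mul_le_mul_of_nonneg_right _ hpos.le
            linarith
    · push Not at hy2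
      obtain ⟨e1, e2⟩ := (hφ2 y hy2.le).2 (by linarith)
      rw [hφd y hy] at e1
      rw [hφdd y hy] at e2
      have b2 : |y * (-lam * (α * ((α - 1) * (y - 1) ^ (α - 2))) + deriv (deriv ψ) y)| ≤
          2 * C₁ * (y - 1) ^ (α - 2) := by
        rw [abs_mul, abs_of_pos (by linarith : 0 < y)]
        have hs : (y - 1) ^ (α - 2) = (y - 1) * (y - 1) ^ (α - 3) := by
          rw [← Real.rpow_one_add' hy1.le (by linarith)]; congr 1; ring
        have hp3 : 0 < (y - 1) ^ (α - 3) := Real.rpow_pos_of_pos hy1 _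
        calc _ ≤ y * (C₁ * (y - 1) ^ (α - 3)) := mul_le_mul_of_nonneg_left e2 (by linarith)
          _ ≤ (2 * (y - 1)) * (C₁ * (y - 1) ^ (α - 3)) := by gcongr; linarith
          _ = _ := by rw [hs]; ring
      calc _ ≤ |(2 * β - 1) * (-lam * (α * (y - 1) ^ (α - 1)) + deriv ψ y)| +
            |y * (-lam * (α * ((α - 1) * (y - 1) ^ (α - 2))) + deriv (deriv ψ) y)| := abs_sub _ _
        _ ≤ 1 * (C₁ * (y - 1) ^ (α - 2)) + 2 * C₁ * (y - 1) ^ (α - 2) := by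
            refine add_le_add ?_ b2
            rw [abs_mul]
            exact mul_le_mul hb e1 (abs_nonneg _) (by norm_num)
        _ = 3 * C₁ * (y - 1) ^ (α - 2) := by ring
        _ ≤ _ := by
            apply mul_le_mul_of_nonneg_right _ hpos.le
            linarith
  · have := measurable_deriv ψ
    fun_prop
  · have := measurable_deriv (deriv ψ)
    fun_prop

lemma glue_deriv {u v : ℝ → ℝ} {a c : ℝ} (hu : HasDerivAt u a c) (hv : HasDerivAt v a c)
    (h : u c = v c) : HasDerivAt (fun y => if c ≤ y then u y else v y) a c := by
  rw [hasDerivAt_iff_tendsto_slope] at *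
  have := Tendsto.if' (p := fun y => c ≤ y) hu hv
  refine this.congr fun y => ?_
  by_cases hy : c ≤ y
  · simp [slope_def_field, hy]
  · simp [slope_def_field, hy, h]

lemma glue_cont {u v : ℝ → ℝ} {c : ℝ} (hu : ContinuousAt u c) (hv : ContinuousAt v c)
    (h : u c = v c) : ContinuousAt (fun y => if c ≤ y then u y else v y) c := by
  unfold ContinuousAt at *
  simp only [le_refl, if_true]
  exact Tendsto.if' hu (h ▸ hv)

lemma ite_ev_gt {u v : ℝ → ℝ} {c y : ℝ} (h : c < y) :
    (fun y => if c ≤ y then u y else v y) =ᶠ[𝓝 y] u := by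
  filter_upwards [lt_mem_nhds h] with z hz using if_pos hz.le

lemma ite_ev_lt {u v : ℝ → ℝ} {c y : ℝ} (h : y < c) :
    (fun y => if c ≤ y then u y else v y) =ᶠ[𝓝 y] v := by
  filter_upwards [gt_mem_nhds h] with z hz using if_neg (not_le.2 hz)

def bΦ (β : ℝ) (f : ℝ → ℝ) (y : ℝ) : ℝ := if 1 ≤ y then f y else y ^ (2 * β) * f (1 / y)
def bΦ1 (β : ℝ) (f f1 : ℝ → ℝ) (y : ℝ) : ℝ :=
  if 1 ≤ y then f1 y else 2 * β * y ^ (2 * β - 1) * f (1 / y) - y ^ (2 * β - 2) * f1 (1 / y)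
def bG (β : ℝ) (f1 f2 : ℝ → ℝ) (y : ℝ) : ℝ :=
  if 1 ≤ y then (2 * β - 1) * f1 y - y * f2 y
  else y ^ (2 * β - 2) * ((2 * β - 1) * f1 (1 / y) - (1 / y) * f2 (1 / y))
def rho (β : ℝ) (f1 f2 : ℝ → ℝ) (s t : ℝ) : ℝ := s ^ (2 * β - 2) * bG β f1 f2 (t / s)

lemma hasDerivAt_onediv {y : ℝ} (hy : 0 < y) : HasDerivAt (fun y : ℝ => 1 / y) (-(1 / y ^ 2)) y := by
  have := hasDerivAt_inv hy.ne'
  simpa [one_div] using this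

lemma rpow_d {y : ℝ} (hy : 0 < y) (p : ℝ) : HasDerivAt (fun y : ℝ => y ^ p) (p * y ^ (p - 1)) y :=
  Real.hasDerivAt_rpow_const (Or.inl hy.ne')

variable {β α C : ℝ} {f f1 f2 : ℝ → ℝ}

lemma inv_ge {y : ℝ} (hy : 0 < y) (h : y ≤ 1) : 1 ≤ 1 / y := by
  rw [le_div_iff₀ hy]; linarith

lemma Good.branch_d (H : Good β α C f f1 f2) {y : ℝ} (hy : 0 < y) (h : y ≤ 1) :
    HasDerivAt (fun y => y ^ (2 * β) * f (1 / y))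
      (2 * β * y ^ (2 * β - 1) * f (1 / y) - y ^ (2 * β - 2) * f1 (1 / y)) y := by
  have h1 := (H.hd1 _ (inv_ge hy h)).comp y (hasDerivAt_onediv hy)
  have h2 := (rpow_d hy (2 * β)).fun_mul h1
  refine h2.congr_deriv ?_
  have e : y ^ (2 * β) = y ^ (2 * β - 2) * y ^ 2 := by
    rw [← Real.rpow_natCast, ← Real.rpow_add hy]; congr 1; push_cast; ring
  simp only [Function.comp]
  rw [e]
  field_simp
  ring

lemma Good.Phi_d (H : Good β α C f f1 f2) {y : ℝ} (hy : 0 < y) :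
    HasDerivAt (bΦ β f) (bΦ1 β f f1 y) y := by
  unfold bΦ1
  rcases lt_trichotomy 1 y with h | h | h
  · rw [if_pos h.le]
    exact (H.hd1 y h.le).congr_of_eventuallyEq (ite_ev_gt h)
  · subst h
    rw [if_pos le_rfl]
    refine glue_deriv (H.hd1 1 le_rfl) ((H.branch_d one_pos le_rfl).congr_deriv ?_) (by simp)
    simp [H.h1]; ring
  · rw [if_neg (not_le.2 h)]
    exact (H.branch_d hy h.le).congr_of_eventuallyEq (ite_ev_lt h)

lemma Good.Phi1_c (H : Good β α C f f1 f2) {y : ℝ} (hy : 0 < y) :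
    ContinuousAt (bΦ1 β f f1) y := by
  have hb : ∀ y : ℝ, 0 < y → y ≤ 1 → ContinuousAt
      (fun y => 2 * β * y ^ (2 * β - 1) * f (1 / y) - y ^ (2 * β - 2) * f1 (1 / y)) y := by
    intro y hy h
    have c0 := (hasDerivAt_onediv hy).continuousAt
    have c1 : ContinuousAt (fun y => f (1 / y)) y :=
      ContinuousAt.comp (g := f) (H.hd1 _ (inv_ge hy h)).continuousAt c0
    have c2 : ContinuousAt (fun y => f1 (1 / y)) y :=
      ContinuousAt.comp (g := f1) (H.hc1 _ (inv_ge hy h)) c0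
    have c3 := (rpow_d hy (2 * β - 1)).continuousAt
    have c4 := (rpow_d hy (2 * β - 2)).continuousAt
    exact ((c3.const_mul (2 * β)).mul c1).sub (c4.mul c2)
  rcases lt_trichotomy 1 y with h | h | h
  · exact (H.hc1 y h.le).congr (ite_ev_gt h).symm
  · subst h
    refine glue_cont (H.hc1 1 le_rfl) (hb 1 one_pos le_rfl) ?_
    simp [H.h1]; ring
  · exact (hb y hy h.le).congr (ite_ev_lt h).symm

lemma Good.Phi1_d (H : Good β α C f f1 f2) {y : ℝ} (hy : 0 < y) (hne : y ≠ 1) :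
    ∃ D, HasDerivAt (bΦ1 β f f1) D y ∧ (2 * β - 1) * bΦ1 β f f1 y - y * D = bG β f1 f2 y := by
  rcases lt_or_gt_of_ne hne with h | h
  · have a1 := (H.hd1 _ (inv_ge hy h.le)).comp y (hasDerivAt_onediv hy)
    have h' : 1 < 1 / y := by rw [lt_div_iff₀ hy]; linarith
    have a2 := (H.hd2 _ h').comp y (hasDerivAt_onediv hy)
    have a3 := (((rpow_d hy (2 * β - 1)).const_mul (2 * β)).fun_mul a1).fun_sub
      ((rpow_d hy (2 * β - 2)).fun_mul a2)
    refine ⟨_, a3.congr_of_eventuallyEq (ite_ev_lt h), ?_⟩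
    unfold bΦ1 bG
    rw [if_neg (not_le.2 h), if_neg (not_le.2 h)]
    simp only [Function.comp]
    have e1 : y ^ (2 * β - 1) = y ^ (2 * β - 2) * y := by
      rw [← Real.rpow_add_one hy.ne']; congr 1; ring
    have e2 : 2 * β - 1 - 1 = 2 * β - 2 := by ring
    have e3 : y ^ (2 * β - 2 - 1) = y ^ (2 * β - 2) * y⁻¹ := by
      rw [← Real.rpow_neg_one, ← Real.rpow_add hy]; congr 1
    rw [e2, e3, e1]
    field_simp
    ring
  · refine ⟨_, (H.hd2 y h).congr_of_eventuallyEq (ite_ev_gt h), ?_⟩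
    unfold bΦ1 bG
    rw [if_pos h.le, if_pos h.le]

lemma covR_eq {φ : ℝ → ℝ} (hφ : ∀ y, 1 ≤ y → φ y = f y) {s t : ℝ} (hs : 0 < s) (ht : 0 < t) :
    covR β φ s t = s ^ (2 * β) * bΦ β f (t / s) := by
  unfold covR bΦ
  rw [if_neg (by push Not; exact ⟨hs.ne', ht.ne'⟩)]
  by_cases h : s ≤ t
  · rw [min_eq_left h, max_eq_right h, if_pos (by rw [le_div_iff₀ hs]; linarith),
      hφ _ (by rw [le_div_iff₀ hs]; linarith)]
  · push Not at h
    rw [min_eq_right h.le, max_eq_left h.le, if_neg (by rw [le_div_iff₀ hs]; linarith),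
      hφ _ (by rw [le_div_iff₀ ht]; linarith), Real.div_rpow ht.le hs.le, one_div_div]
    have : s ^ (2 * β) ≠ 0 := (Real.rpow_pos_of_pos hs _).ne'
    field_simp

lemma Good.rho_bound (H : Good β α C f f1 f2) {s t : ℝ} (hs : 0 < s) (ht : 0 < t) (hne : s ≠ t) :
    |rho β f1 f2 s t| ≤ C * (min s t) ^ (2 * β - α) * |s - t| ^ (α - 2) := by
  have key : ∀ a b : ℝ, 0 < a → a < b → a ^ (2 * β - 2) * (C * (b / a - 1) ^ (α - 2)) =
      C * a ^ (2 * β - α) * (b - a) ^ (α - 2) := by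
    intro a b ha hab
    have e1 : b / a - 1 = (b - a) / a := by field_simp
    rw [e1, Real.div_rpow (by linarith) ha.le]
    have e2 : a ^ (2 * β - 2) = a ^ (2 * β - α) * a ^ (α - 2) := by
      rw [← Real.rpow_add ha]; congr 1; ring
    rw [e2]
    have : a ^ (α - 2) ≠ 0 := (Real.rpow_pos_of_pos ha _).ne'
    field_simp
  unfold rho bG
  rcases lt_or_gt_of_ne hne with h | h
  · have h1 : 1 < t / s := by rw [lt_div_iff₀ hs]; linarith
    rw [if_pos h1.le, min_eq_left h.le, abs_sub_comm s t, abs_of_pos (sub_pos.2 h), ← key s t hs h,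
      abs_mul, abs_of_pos (Real.rpow_pos_of_pos hs _)]
    exact mul_le_mul_of_nonneg_left (H.hg _ h1) (Real.rpow_pos_of_pos hs _).le
  · have h1 : ¬ 1 ≤ t / s := by rw [le_div_iff₀ hs]; linarith
    have h2 : 1 < s / t := by rw [lt_div_iff₀ ht]; linarith
    rw [if_neg h1, min_eq_right h.le, abs_of_pos (sub_pos.2 h), ← key t s ht h, one_div_div,
      ← mul_assoc, ← Real.mul_rpow hs.le (by positivity), mul_div_cancel₀ _ hs.ne',
      abs_mul, abs_of_pos (Real.rpow_pos_of_pos ht _)]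
    exact mul_le_mul_of_nonneg_left (H.hg _ h2) (Real.rpow_pos_of_pos ht _).le

lemma Good.rho_meas (H : Good β α C f f1 f2) :
    Measurable (fun p : ℝ × ℝ => rho β f1 f2 p.1 p.2) := by
  have h1 := H.hm1
  have h2 := H.hm2
  have hG : Measurable (bG β f1 f2) := by
    unfold bG
    refine Measurable.ite measurableSet_Ici ?_ ?_ <;> fun_prop
  unfold rho
  fun_prop

end anal

section ftc
open Set Topology

lemma abs_rpow_int {r : ℝ} (hr : -1 < r) {A : ℝ} (hA : 0 ≤ A) :
    IntegrableOn (fun u : ℝ => |u| ^ r) (Icc (-A) A) := by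
  have h1 : IntervalIntegrable (fun u : ℝ => |u| ^ r) volume 0 A := by
    refine (intervalIntegral.intervalIntegrable_rpow' (a := 0) (b := A) hr).congr ?_
    intro u hu
    rw [uIoc_of_le hA] at hu
    simp only [abs_of_pos hu.1]
  have h2 : IntervalIntegrable (fun u : ℝ => |u| ^ r) volume (-A) 0 := by
    have := (IntervalIntegrable.iff_comp_neg (f := fun u : ℝ => |u| ^ r) (a := 0) (b := A)).1 h1
    simp only [abs_neg, neg_zero] at this
    exact this.symm
  have := h2.trans h1
  rw [intervalIntegrable_iff_integrableOn_Icc_of_le (by linarith)] at this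
  exact this

lemma abs_sub_rpow_ii {r : ℝ} (hr : -1 < r) (a b t : ℝ) :
    IntervalIntegrable (fun s : ℝ => |s - t| ^ r) volume a b := by
  have h : IntervalIntegrable (fun u : ℝ => |u| ^ r) volume (a - t) (b - t) := by
    rw [intervalIntegrable_iff]
    refine (abs_rpow_int hr (A := |a - t| + |b - t|) (by positivity)).mono_set ?_
    intro u hu
    have h1 := abs_le.1 (le_refl |a - t|)
    have h2 := abs_le.1 (le_refl |b - t|)
    have h3 := abs_nonneg (a - t)
    have h4 := abs_nonneg (b - t)
    rw [mem_uIoc] at hu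
    constructor <;> rcases hu with hu | hu <;> linarith [hu.1, hu.2]
  have := h.comp_sub_right t
  simpa using this

lemma abs_sub_int2 {r : ℝ} (hr : -1 < r) {T : ℝ} (hT : 0 ≤ T) :
    IntegrableOn (fun p : ℝ × ℝ => |p.1 - p.2| ^ r) (Ioc 0 T ×ˢ Ioc 0 T) := by
  have h1 : Integrable ((Icc (-T) T).indicator (fun u : ℝ => |u| ^ r)) :=
    (abs_rpow_int hr hT).integrable_indicator measurableSet_Icc
  have h2 : Integrable ((Ioc 0 T).indicator (fun _ : ℝ => (1:ℝ))) :=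
    (integrableOn_const (by simp)).integrable_indicator measurableSet_Ioc
  have h3 := h1.mul_prod h2
  have mp := measurePreserving_sub_prod (volume : Measure ℝ) (volume : Measure ℝ)
  have h4 := mp.integrable_comp_of_integrable h3
  refine (h4.integrableOn (s := Ioc 0 T ×ˢ Ioc 0 T)).congr_fun ?_
    (measurableSet_Ioc.prod measurableSet_Ioc)
  rintro ⟨s, t⟩ ⟨⟨a1, a2⟩, b⟩
  have b' := b
  obtain ⟨b1, b2⟩ := b
  simp only at a1 a2 b1 b2 b'
  simp only [Function.comp]
  rw [indicator_of_mem b', indicator_of_mem (by constructor <;> linarith), mul_one]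

lemma diag_null : volume {p : ℝ × ℝ | p.1 = p.2} = 0 := by
  rw [Measure.volume_eq_prod, Measure.measure_prod_null (measurableSet_eq_fun measurable_fst measurable_snd)]
  filter_upwards with s
  have : Prod.mk s ⁻¹' {p : ℝ × ℝ | p.1 = p.2} = {s} := by ext t; simp [eq_comm]
  rw [this]; simp

lemma diag_ae (S : Set (ℝ × ℝ)) : ∀ᵐ p : ℝ × ℝ ∂(volume.restrict S), p.1 ≠ p.2 := by
  apply ae_restrict_of_ae
  rw [ae_iff]
  simpa using diag_null

variable {β α C : ℝ} {f f1 f2 : ℝ → ℝ}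

lemma Good.rho_bd (H : Good β α C f f1 f2) {T s t : ℝ} (hs : s ∈ Ioc 0 T) (ht : t ∈ Ioc 0 T)
    (hne : s ≠ t) : |rho β f1 f2 s t| ≤ C * T ^ (2 * β - α) * |s - t| ^ (α - 2) := by
  refine (H.rho_bound hs.1 ht.1 hne).trans ?_
  have := H.hC
  have h1 : 0 < min s t := lt_min hs.1 ht.1
  have h2 : min s t ≤ T := (min_le_left _ _).trans hs.2
  have h3 : 0 ≤ 2 * β - α := by linarith [H.hαβ]
  gcongr

lemma Good.rho_int2 (H : Good β α C f f1 f2) {T : ℝ} (hT : 0 ≤ T) :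
    IntegrableOn (fun p : ℝ × ℝ => rho β f1 f2 p.1 p.2) (Ioc 0 T ×ˢ Ioc 0 T) := by
  refine Integrable.mono' ((abs_sub_int2 (r := α - 2) (by linarith [H.hα1]) hT).const_mul
    (C * T ^ (2 * β - α))) H.rho_meas.aestronglyMeasurable ?_
  filter_upwards [diag_ae (Ioc 0 T ×ˢ Ioc 0 T),
    ae_restrict_mem (measurableSet_Ioc.prod measurableSet_Ioc)] with p hp hm
  exact H.rho_bd hm.1 hm.2 hp

lemma Good.rho_ii (H : Good β α C f f1 f2) {s1 s2 t : ℝ} (hs1 : 0 < s1) (hs : s1 ≤ s2)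
    (ht : 0 < t) : IntervalIntegrable (fun s => rho β f1 f2 s t) volume s1 s2 := by
  have h0 := (abs_sub_rpow_ii (r := α - 2) (by linarith [H.hα1]) s1 s2 t).const_mul
    (C * (s2 + t) ^ (2 * β - α))
  rw [intervalIntegrable_iff_integrableOn_Ioc_of_le hs] at h0 ⊢
  refine Integrable.mono' h0
    (H.rho_meas.comp (measurable_id.prodMk measurable_const)).aestronglyMeasurable ?_
  have hne : ∀ᵐ s : ℝ ∂(volume.restrict (Ioc s1 s2)), s ≠ t := by
    apply ae_restrict_of_ae
    rw [ae_iff]; simp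
  filter_upwards [hne, ae_restrict_mem measurableSet_Ioc] with s hst hm
  exact H.rho_bd ⟨by linarith [hm.1], by linarith [hm.2]⟩ ⟨ht, by linarith⟩ hst

lemma Good.D_d (H : Good β α C f f1 f2) {s t : ℝ} (hs : 0 < s) (ht : 0 < t) (hne : s ≠ t) :
    HasDerivAt (fun s => s ^ (2 * β - 1) * bΦ1 β f f1 (t / s)) (rho β f1 f2 s t) s := by
  have hy : 0 < t / s := by positivity
  have hy1 : t / s ≠ 1 := by rw [Ne, div_eq_one_iff_eq hs.ne']; exact hne.symm
  obtain ⟨D, hD, hE⟩ := H.Phi1_d hy hy1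
  have h0 : HasDerivAt (fun s : ℝ => t / s) (t * (-(1 / s ^ 2))) s := by
    have := (hasDerivAt_onediv hs).const_mul t
    simpa [div_eq_mul_inv] using this
  have h1 := hD.comp s h0
  have h2 := (rpow_d hs (2 * β - 1)).fun_mul h1
  refine h2.congr_deriv ?_
  unfold rho
  rw [← hE]
  have e : s ^ (2 * β - 1) = s ^ (2 * β - 2) * s := by
    rw [← Real.rpow_add_one hs.ne']; congr 1; ring
  have e2 : 2 * β - 1 - 1 = 2 * β - 2 := by ring
  simp only [Function.comp]
  rw [e2, e]
  field_simp
  ring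

lemma Good.D_c (H : Good β α C f f1 f2) {s t : ℝ} (hs : 0 < s) (ht : 0 < t) :
    ContinuousAt (fun s => s ^ (2 * β - 1) * bΦ1 β f f1 (t / s)) s := by
  have h0 : ContinuousAt (fun s : ℝ => t / s) s := continuousAt_const.div continuousAt_id hs.ne'
  have h1 : ContinuousAt (fun s => bΦ1 β f f1 (t / s)) s :=
    ContinuousAt.comp (g := bΦ1 β f f1) (H.Phi1_c (by positivity)) h0
  exact (rpow_d hs _).continuousAt.mul h1

lemma Good.D_ct (H : Good β α C f f1 f2) {s t : ℝ} (hs : 0 < s) (ht : 0 < t) :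
    ContinuousAt (fun t => s ^ (2 * β - 1) * bΦ1 β f f1 (t / s)) t := by
  have h0 : ContinuousAt (fun t : ℝ => t / s) t := by fun_prop
  have h1 : ContinuousAt (fun t => bΦ1 β f f1 (t / s)) t :=
    ContinuousAt.comp (g := bΦ1 β f f1) (H.Phi1_c (by positivity)) h0
  exact h1.const_mul _

lemma Good.R_d (H : Good β α C f f1 f2) {s t : ℝ} (hs : 0 < s) (ht : 0 < t) :
    HasDerivAt (fun t => s ^ (2 * β) * bΦ β f (t / s)) (s ^ (2 * β - 1) * bΦ1 β f f1 (t / s)) t := by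
  have h0 : HasDerivAt (fun t : ℝ => t / s) (1 / s) t := (hasDerivAt_id t).div_const s
  have h1 := (H.Phi_d (y := t / s) (by positivity)).comp t h0
  refine (h1.const_mul (s ^ (2 * β))).congr_deriv ?_
  have e : s ^ (2 * β) = s ^ (2 * β - 1) * s := by
    rw [← Real.rpow_add_one hs.ne']; congr 1; ring
  rw [e]
  field_simp

lemma Good.D_ii (H : Good β α C f f1 f2) {s t1 t2 : ℝ} (hs : 0 < s) (ht1 : 0 < t1) (ht : t1 ≤ t2) :
    IntervalIntegrable (fun t => s ^ (2 * β - 1) * bΦ1 β f f1 (t / s)) volume t1 t2 := by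
  apply ContinuousOn.intervalIntegrable
  intro t hm
  rw [uIcc_of_le ht] at hm
  exact (H.D_ct hs (by linarith [hm.1])).continuousWithinAt

lemma Good.rect (H : Good β α C f f1 f2) {s1 s2 t1 t2 : ℝ} (hs1 : 0 < s1) (hs : s1 ≤ s2)
    (ht1 : 0 < t1) (ht : t1 ≤ t2) :
    ∫ p in Ioc s1 s2 ×ˢ Ioc t1 t2, rho β f1 f2 p.1 p.2 =
      s2 ^ (2 * β) * bΦ β f (t2 / s2) - s1 ^ (2 * β) * bΦ β f (t2 / s1)
      - s2 ^ (2 * β) * bΦ β f (t1 / s2) + s1 ^ (2 * β) * bΦ β f (t1 / s1) := by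
  have hint : IntegrableOn (fun p : ℝ × ℝ => rho β f1 f2 p.1 p.2) (Ioc s1 s2 ×ˢ Ioc t1 t2) := by
    refine (H.rho_int2 (T := s2 + t2) (by linarith)).mono_set ?_
    apply Set.prod_mono <;> intro u hu <;> constructor <;> linarith [hu.1, hu.2]
  rw [Measure.volume_eq_prod, ← Measure.prod_restrict, integral_prod_symm]
  swap
  · rw [Measure.prod_restrict]; exact hint
  have h1 : ∀ t ∈ Ioc t1 t2, ∫ s in Ioc s1 s2, rho β f1 f2 s t =
      s2 ^ (2 * β - 1) * bΦ1 β f f1 (t / s2) - s1 ^ (2 * β - 1) * bΦ1 β f f1 (t / s1) := by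
    intro t hm
    have ht0 : 0 < t := by linarith [hm.1]
    rw [← intervalIntegral.integral_of_le hs]
    refine integral_eq_of_hasDerivAt_off_countable_of_le
      (fun s => s ^ (2 * β - 1) * bΦ1 β f f1 (t / s)) _ hs (countable_singleton t) ?_ ?_
      (H.rho_ii hs1 hs ht0)
    · intro s hsm
      exact (H.D_c (by linarith [hsm.1]) ht0).continuousWithinAt
    · rintro s ⟨hsm, hne⟩
      exact H.D_d (by linarith [hsm.1]) ht0 hne
  rw [setIntegral_congr_fun measurableSet_Ioc h1, ← intervalIntegral.integral_of_le ht,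
    intervalIntegral.integral_sub (H.D_ii (by linarith) ht1 ht) (H.D_ii hs1 ht1 ht)]
  have h2 : ∀ s, 0 < s → ∫ t in t1..t2, s ^ (2 * β - 1) * bΦ1 β f f1 (t / s) =
      s ^ (2 * β) * bΦ β f (t2 / s) - s ^ (2 * β) * bΦ β f (t1 / s) := by
    intro s hs0
    refine intervalIntegral.integral_eq_sub_of_hasDerivAt
      (f := fun t => s ^ (2 * β) * bΦ β f (t / s)) ?_ (H.D_ii hs0 ht1 ht)
    intro t hm
    rw [uIcc_of_le ht] at hm
    exact H.R_d hs0 (by linarith [hm.1])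
  rw [h2 s2 (by linarith), h2 s1 hs1]
  ring

lemma Good.inc_eq (H : Good β α C f f1 f2) {φ : ℝ → ℝ} (hφ : ∀ y, 1 ≤ y → φ y = f y)
    {d e k l : ℕ} (hd : 1 ≤ d) (he : 1 ≤ e) (hk : 1 ≤ k) (hl : 1 ≤ l) :
    incR β φ d e k l = ∫ p in bx d e (k, l), rho β f1 f2 p.1 p.2 := by
  have hd' : (0 : ℝ) < d := by exact_mod_cast hd
  have he' : (0 : ℝ) < e := by exact_mod_cast he
  have hk' : (0 : ℝ) < k := by exact_mod_cast hk
  have hl' : (0 : ℝ) < l := by exact_mod_cast hl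
  unfold bx cel incR
  rw [H.rect (by positivity) (by gcongr; linarith) (by positivity) (by gcongr; linarith)]
  rw [covR_eq hφ (by positivity) (by positivity), covR_eq hφ (by positivity) (by positivity),
    covR_eq hφ (by positivity) (by positivity), covR_eq hφ (by positivity) (by positivity)]

end ftc

section diag
open Set Topology

lemma covR_hom {β : ℝ} {φ : ℝ → ℝ} {s t c : ℝ} (hs : 0 ≤ s) (ht : 0 ≤ t) (hc : 0 < c) :
    covR β φ (s / c) (t / c) = c ^ (-(2 * β)) * covR β φ s t := by
  unfold covR
  have h1 : (s / c = 0 ∨ t / c = 0) ↔ (s = 0 ∨ t = 0) := by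
    simp [div_eq_zero_iff, hc.ne']
  by_cases h : s = 0 ∨ t = 0
  · rw [if_pos (h1.2 h), if_pos h, mul_zero]
  · rw [if_neg (fun h' => h (h1.1 h')), if_neg h, min_div_div_right hc.le, max_div_div_right hc.le,
      div_div_div_cancel_right₀ hc.ne', Real.div_rpow (le_min hs ht) hc.le, Real.rpow_neg hc.le]
    ring

lemma incR_hom {β : ℝ} {φ : ℝ → ℝ} {d k : ℕ} (hd : 1 ≤ d) :
    incR β φ d d k k = (d : ℝ) ^ (-(2 * β)) * incR β φ 1 1 k k := by
  have hd' : (0 : ℝ) < d := by exact_mod_cast hd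
  unfold incR
  rw [covR_hom (by positivity) (by positivity) hd', covR_hom (by positivity) (by positivity) hd',
    covR_hom (by positivity) (by positivity) hd', covR_hom (by positivity) (by positivity) hd']
  simp only [Nat.cast_one, div_one]
  ring

lemma inc_diag {β lam α ν : ℝ} {φ ψ : ℝ → ℝ} (hyp : SelfSimilarHyp β lam α ν φ ψ) {k : ℕ}
    (hk : 1 ≤ k) : incR β φ 1 1 k k = 2 * lam * (k : ℝ) ^ (2 * β - α) + (k : ℝ) ^ (2 * β) *
      (ψ 1 * ((1 + 1 / (k : ℝ)) ^ (2 * β) + 1) - 2 * ψ (1 + 1 / (k : ℝ))) := by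
  obtain ⟨⟨hβ0, hβ1⟩, hlam, ⟨hα0, hαβ⟩, hν, hφ, -⟩ := hyp
  have hk' : (0 : ℝ) < k := by exact_mod_cast hk
  have h1 : φ 1 = ψ 1 := by rw [hφ 1 le_rfl, sub_self, Real.zero_rpow hα0.ne']; ring
  have hk1 : (0 : ℝ) < k + 1 := by linarith
  have hq : ((k : ℝ) + 1) / k = 1 + 1 / k := by field_simp
  have h2 : φ (1 + 1 / k) = -lam * (k : ℝ) ^ (-α) + ψ (1 + 1 / k) := by
    rw [hφ _ (by simp)]
    rw [add_sub_cancel_left, one_div, Real.inv_rpow hk'.le, Real.rpow_neg hk'.le]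
  have e1 : ((k : ℝ) + 1) ^ (2 * β) = (k : ℝ) ^ (2 * β) * (1 + 1 / (k : ℝ)) ^ (2 * β) := by
    rw [← Real.mul_rpow hk'.le (by positivity)]; congr 1; field_simp
  have e2 : (k : ℝ) ^ (2 * β - α) = (k : ℝ) ^ (2 * β) * (k : ℝ) ^ (-α) := by
    rw [← Real.rpow_add hk']; congr 1
  unfold incR covR
  simp only [Nat.cast_one, div_one]
  rw [if_neg (by simp [hk1.ne']), if_neg (by simp [hk1.ne', hk'.ne']),
    if_neg (by simp [hk1.ne', hk'.ne']), if_neg (by simp [hk'.ne'])]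
  have l : (k : ℝ) ≤ k + 1 := by linarith
  rw [min_eq_left l, max_eq_right l, min_eq_right l, max_eq_left l, min_self, max_self, min_self,
    max_self, div_self hk1.ne', div_self hk'.ne', hq, h1, h2, e1, e2]
  ring

lemma q_lim {β lam α ν : ℝ} {φ ψ : ℝ → ℝ} (hyp : SelfSimilarHyp β lam α ν φ ψ)
    (hα1 : 3 / 2 < α) (hα2 : α < 2) :
    Tendsto (fun y => (ψ 1 * (y ^ (2 * β) + 1) - 2 * ψ y) / (y - 1) ^ α) (𝓝[>] 1) (𝓝 0) := by
  obtain ⟨⟨hβ0, hβ1⟩, hlam, ⟨hα0, hαβ⟩, hν, hφ, ⟨S, hSo, hS, hψ⟩, -, hψ11, -⟩ := hyp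
  have hq : ∀ y : ℝ, 1 ≤ y → HasDerivAt (fun y => ψ 1 * (y ^ (2 * β) + 1) - 2 * ψ y)
      (ψ 1 * (2 * β * y ^ (2 * β - 1)) - 2 * deriv ψ y) y := by
    intro y hy
    exact (((rpow_d (by linarith) (2 * β)).add_const 1).const_mul (ψ 1)).fun_sub
      ((hψ y (hS hy)).1.hasDerivAt.const_mul 2)
  have hg : ∀ y : ℝ, HasDerivAt (fun y : ℝ => (y - 1) ^ α) (α * (y - 1) ^ (α - 1)) y := by
    intro y
    have := ((hasDerivAt_id y).sub_const 1).rpow_const (p := α) (Or.inr (by linarith))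
    simpa using this
  have hmem : ∀ᶠ y : ℝ in 𝓝[>] 1, 1 < y := eventually_mem_nhdsWithin
  refine HasDerivAt.lhopital_zero_nhdsGT (f' := fun y => ψ 1 * (2 * β * y ^ (2 * β - 1)) - 2 * deriv ψ y)
    (g' := fun y => α * (y - 1) ^ (α - 1)) ?_ ?_ ?_ ?_ ?_ ?_
  · filter_upwards [hmem] with y hy using hq y hy.le
  · filter_upwards with y using hg y
  · filter_upwards [hmem] with y hy
    have : 0 < y - 1 := by linarith
    positivity
  · have := (hq 1 le_rfl).continuousAt.tendsto
    simp only [Real.one_rpow] at this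
    have e : ψ 1 * (1 + 1) - 2 * ψ 1 = 0 := by ring
    rw [e] at this
    exact this.mono_left nhdsWithin_le_nhds
  · have := (hg 1).continuousAt.tendsto
    simp only [sub_self, Real.zero_rpow hα0.ne'] at this
    exact this.mono_left nhdsWithin_le_nhds
  · have hp : HasDerivAt (fun y => ψ 1 * (2 * β * y ^ (2 * β - 1)) - 2 * deriv ψ y)
        (ψ 1 * (2 * β * ((2 * β - 1) * 1 ^ (2 * β - 1 - 1))) - 2 * deriv (deriv ψ) 1) 1 :=
      (((rpow_d one_pos (2 * β - 1)).const_mul (2 * β)).const_mul (ψ 1)).fun_sub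
      ((hψ 1 (hS (le_refl (1:ℝ)))).2.hasDerivAt.const_mul 2)
    rw [hasDerivAt_iff_tendsto_slope] at hp
    have hp' := hp.mono_left (nhdsWithin_mono 1 (fun y (hy : 1 < y) => (ne_of_gt hy : y ≠ 1)))
    have hc : Tendsto (fun y : ℝ => (y - 1) ^ (2 - α) / α) (𝓝[>] 1) (𝓝 0) := by
      have : ContinuousAt (fun y : ℝ => (y - 1) ^ (2 - α) / α) 1 :=
        (((continuousAt_id.sub continuousAt_const).rpow_const (Or.inr (by linarith)))).div_const α
      have := this.tendsto
      simp only [sub_self, Real.zero_rpow (by linarith : (2 - α) ≠ 0), zero_div] at this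
      exact this.mono_left nhdsWithin_le_nhds
    have := hp'.mul hc
    rw [mul_zero] at this
    refine this.congr' ?_
    filter_upwards [hmem] with y hy
    have h0 : 0 < y - 1 := by linarith
    rw [slope_def_field]
    simp only [Real.one_rpow, mul_one]
    have e0 : ψ 1 * (2 * β) - 2 * deriv ψ 1 = 0 := by rw [hψ11 (by linarith)]; ring
    have e1 : (y - 1) ^ (2 - α) = (y - 1) / (y - 1) ^ (α - 1) := by
      rw [eq_div_iff (Real.rpow_pos_of_pos h0 _).ne', ← Real.rpow_add h0]
      norm_num
    rw [e0, e1]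
    have := (Real.rpow_pos_of_pos h0 (α - 1)).ne'
    field_simp
    ring

def wf (β α : ℝ) (φ : ℝ → ℝ) (k : ℕ) : ℝ := ((k : ℝ) + 1) ^ (2 * β - α) / incR β φ 1 1 k k

lemma wf_lim {β lam α ν : ℝ} {φ ψ : ℝ → ℝ} (hyp : SelfSimilarHyp β lam α ν φ ψ)
    (hα1 : 3 / 2 < α) (hα2 : α < 2) :
    Tendsto (wf β α φ) atTop (𝓝 (2 * lam)⁻¹) := by
  have hlam := hyp.2.1
  have hαβ := hyp.2.2.1
  have hy : Tendsto (fun k : ℕ => 1 + 1 / (k : ℝ)) atTop (𝓝[>] 1) := by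
    rw [tendsto_nhdsWithin_iff]
    constructor
    · have := (tendsto_const_nhds (x := (1:ℝ))).add tendsto_one_div_atTop_nhds_zero_nat
      simpa using this
    · filter_upwards [eventually_ge_atTop 1] with k hk
      have hk' : (0 : ℝ) < k := by exact_mod_cast hk
      simp; omega
  have h1 := (q_lim hyp hα1 hα2).comp hy
  have h2 : Tendsto (fun k : ℕ => incR β φ 1 1 k k / (k : ℝ) ^ (2 * β - α)) atTop (𝓝 (2 * lam)) := by
    have := h1.const_add (2 * lam)
    rw [add_zero] at this
    refine this.congr' ?_
    filter_upwards [eventually_ge_atTop 1] with k hk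
    have hk' : (0 : ℝ) < k := by exact_mod_cast hk
    rw [inc_diag hyp hk]
    simp only [Function.comp, add_sub_cancel_left]
    have e2 : (k : ℝ) ^ (2 * β) = (k : ℝ) ^ (2 * β - α) * (k : ℝ) ^ α := by
      rw [← Real.rpow_add hk']; congr 1; ring
    have h3 := (Real.rpow_pos_of_pos hk' (2 * β - α)).ne'
    have h4 := (Real.rpow_pos_of_pos hk' α).ne'
    rw [e2, one_div, Real.inv_rpow hk'.le]
    field_simp
  have h3 : Tendsto (fun k : ℕ => (1 + 1 / (k : ℝ)) ^ (2 * β - α)) atTop (𝓝 1) := by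
    have := (hy.mono_right nhdsWithin_le_nhds).rpow_const (p := 2 * β - α)
      (Or.inl one_ne_zero)
    simpa using this
  have h4 := h3.mul (h2.inv₀ (by positivity))
  rw [one_mul] at h4
  refine h4.congr' ?_
  filter_upwards [eventually_ge_atTop 1] with k hk
  have hk' : (0 : ℝ) < k := by exact_mod_cast hk
  unfold wf
  have e1 : ((k : ℝ) + 1) ^ (2 * β - α) = (k : ℝ) ^ (2 * β - α) * (1 + 1 / (k : ℝ)) ^ (2 * β - α) := by
    rw [← Real.mul_rpow hk'.le (by positivity)]; congr 1; field_simp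
  rw [e1, inv_div]
  ring

lemma wf_bdd {β lam α ν : ℝ} {φ ψ : ℝ → ℝ} (hyp : SelfSimilarHyp β lam α ν φ ψ)
    (hα1 : 3 / 2 < α) (hα2 : α < 2) : ∃ M, 0 ≤ M ∧ ∀ k, wf β α φ k ≤ M := by
  obtain ⟨M, hM⟩ := (wf_lim hyp hα1 hα2).bddAbove_range
  exact ⟨max M 0, le_max_right _ _, fun k => (hM ⟨k, rfl⟩).trans (le_max_left _ _)⟩

end diag

section fin
open Set Topology

def vv (β α : ℝ) (φ : ℝ → ℝ) (d : ℕ) (s : ℝ) : ℝ :=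
  Real.sqrt (wf β α φ (⌈(d : ℝ) * s⌉₊ - 1) * ((⌈(d : ℝ) * s⌉₊ : ℝ) / d) ^ (-(2 * β - α)))

def v0 (β lam α : ℝ) (s : ℝ) : ℝ := Real.sqrt ((2 * lam)⁻¹ * s ^ (-(2 * β - α)))

lemma vv_meas (β α : ℝ) (φ : ℝ → ℝ) (d : ℕ) : Measurable (vv β α φ d) := by
  have h : Measurable (fun s : ℝ => ⌈(d : ℝ) * s⌉₊) := Nat.measurable_ceil.comp (by fun_prop)
  have h1 : Measurable (fun n : ℕ => Real.sqrt (wf β α φ (n - 1) * ((n : ℝ) / d) ^ (-(2 * β - α)))) :=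
    measurable_from_top
  exact h1.comp h

lemma vv_lim {β lam α ν : ℝ} {φ ψ : ℝ → ℝ} (hyp : SelfSimilarHyp β lam α ν φ ψ)
    (hα1 : 3 / 2 < α) (hα2 : α < 2) {s : ℝ} (hs : 0 < s) :
    Tendsto (fun d : ℕ => vv β α φ d s) atTop (𝓝 (v0 β lam α s)) := by
  unfold vv v0
  have h1 : Tendsto (fun d : ℕ => (⌈(d : ℝ) * s⌉₊ : ℝ) / d) atTop (𝓝 s) := by
    have := (tendsto_nat_ceil_mul_div_atTop (R := ℝ) hs.le).comp tendsto_natCast_atTop_atTop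
    refine this.congr fun d => ?_
    simp [mul_comm]
  have h2 : Tendsto (fun d : ℕ => ⌈(d : ℝ) * s⌉₊ - 1) atTop atTop := by
    refine (tendsto_sub_atTop_nat 1).comp (tendsto_nat_ceil_atTop.comp ?_)
    exact tendsto_natCast_atTop_atTop.atTop_mul_const hs
  exact (((wf_lim hyp hα1 hα2).comp h2).mul (h1.rpow_const (Or.inl hs.ne'))).sqrt

lemma vv_le {β α M : ℝ} {φ : ℝ → ℝ} (hγ : α ≤ 2 * β) (hM0 : 0 ≤ M) (hM : ∀ k, wf β α φ k ≤ M)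
    {d : ℕ} (hd : 1 ≤ d) {s m : ℝ} (hm : 0 < m) (hs : m ≤ s) :
    vv β α φ d s ≤ Real.sqrt (M * m ^ (-(2 * β - α))) := by
  have hd' : (0 : ℝ) < d := by exact_mod_cast hd
  unfold vv
  apply Real.sqrt_le_sqrt
  have h1 : s ≤ (⌈(d : ℝ) * s⌉₊ : ℝ) / d := by
    rw [le_div_iff₀ hd', mul_comm]; exact Nat.le_ceil _
  refine mul_le_mul (hM _) ?_ (by positivity) hM0
  exact Real.rpow_le_rpow_of_nonpos hm (hs.trans h1) (by linarith)

variable {β α C : ℝ} {f f1 f2 : ℝ → ℝ}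

def FF (β α : ℝ) (φ f1 f2 : ℝ → ℝ) (d e : ℕ) (p : ℝ × ℝ) : ℝ :=
  vv β α φ d p.1 * vv β α φ e p.2 * rho β f1 f2 p.1 p.2
def ff (β lam α : ℝ) (f1 f2 : ℝ → ℝ) (p : ℝ × ℝ) : ℝ :=
  v0 β lam α p.1 * v0 β lam α p.2 * rho β f1 f2 p.1 p.2

lemma Good.FF_bd (H : Good β α C f f1 f2) {φ : ℝ → ℝ} {M : ℝ} (hM0 : 0 ≤ M)
    (hM : ∀ k, wf β α φ k ≤ M) {d e : ℕ} (hd : 1 ≤ d) (he : 1 ≤ e) {p : ℝ × ℝ}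
    (h1 : 0 < p.1) (h2 : 0 < p.2) (hne : p.1 ≠ p.2) :
    |FF β α φ f1 f2 d e p| ≤ M * C * |p.1 - p.2| ^ (α - 2) := by
  have hm : 0 < min p.1 p.2 := lt_min h1 h2
  have a1 := vv_le H.hαβ hM0 hM hd hm (min_le_left p.1 p.2)
  have a2 := vv_le H.hαβ hM0 hM he hm (min_le_right p.1 p.2)
  have b1 : 0 ≤ vv β α φ d p.1 := Real.sqrt_nonneg _
  have b2 : 0 ≤ vv β α φ e p.2 := Real.sqrt_nonneg _
  have a3 := H.rho_bound h1 h2 hne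
  have a4 : vv β α φ d p.1 * vv β α φ e p.2 ≤ M * (min p.1 p.2) ^ (-(2 * β - α)) := by
    refine (mul_le_mul a1 a2 b2 (Real.sqrt_nonneg _)).trans ?_
    rw [Real.mul_self_sqrt (by positivity)]
  unfold FF
  rw [abs_mul, abs_of_nonneg (mul_nonneg b1 b2)]
  refine (mul_le_mul a4 a3 (abs_nonneg _) (by positivity)).trans (le_of_eq ?_)
  rw [Real.rpow_neg hm.le]
  have := (Real.rpow_pos_of_pos hm (2 * β - α)).ne'
  field_simp

lemma Good.FF_lim (H : Good β α C f f1 f2) {lam ν : ℝ} {φ ψ : ℝ → ℝ}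
    (hyp : SelfSimilarHyp β lam α ν φ ψ) {p : ℝ × ℝ}
    (h1 : 0 < p.1) (h2 : 0 < p.2) :
    Tendsto (fun q : ℕ × ℕ => FF β α φ f1 f2 q.1 q.2 p) atTop (𝓝 (ff β lam α f1 f2 p)) := by
  have a1 := (vv_lim hyp H.hα1 H.hα2 h1).comp (tendsto_fst (f := (atTop : Filter ℕ)) (g := (atTop : Filter ℕ)))
  have a2 := (vv_lim hyp H.hα1 H.hα2 h2).comp (tendsto_snd (f := (atTop : Filter ℕ)) (g := (atTop : Filter ℕ)))
  rw [prod_atTop_atTop_eq] at a1 a2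
  exact (a1.mul a2).mul_const _

lemma Good.FF_meas (H : Good β α C f f1 f2) (φ : ℝ → ℝ) (d e : ℕ) :
    Measurable (FF β α φ f1 f2 d e) :=
  (((vv_meas β α φ d).comp measurable_fst).mul ((vv_meas β α φ e).comp measurable_snd)).mul H.rho_meas

lemma Good.ff_meas (H : Good β α C f f1 f2) (lam : ℝ) :
    Measurable (ff β lam α f1 f2) := by
  have h : Measurable (v0 β lam α) := by unfold v0; fun_prop
  exact ((h.comp measurable_fst).mul (h.comp measurable_snd)).mul H.rho_meas

lemma Good.FF_main (H : Good β α C f f1 f2) {lam ν : ℝ} {φ ψ : ℝ → ℝ}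
    (hyp : SelfSimilarHyp β lam α ν φ ψ) {x : ℝ} (hx : 0 < x) :
    ∃ L, Tendsto (fun q : ℕ × ℕ => Qf x q.1 q.2 (FF β α φ f1 f2 q.1 q.2)) atTop (𝓝 L) := by
  obtain ⟨M, hM0, hM⟩ := wf_bdd hyp H.hα1 H.hα2
  set K := M * C
  have hC := H.hC
  have hK : 0 ≤ K := by positivity
  have hTQ : MeasurableSet (TQ x) := measurableSet_Ioc.prod measurableSet_Ioc
  -- square of the dominating function is integrable
  have hdom : MemLp (fun p : ℝ × ℝ => K * |p.1 - p.2| ^ (α - 2)) 2 (volume.restrict (TQ x)) := by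
    have hm : Measurable (fun p : ℝ × ℝ => K * |p.1 - p.2| ^ (α - 2)) := by fun_prop
    rw [memLp_two_iff_integrable_sq hm.aestronglyMeasurable]
    have := (abs_sub_int2 (r := 2 * (α - 2)) (by linarith [H.hα1]) (T := x + 1) (by linarith)).const_mul
      (K ^ 2)
    refine this.congr ?_
    filter_upwards with p
    have e : 2 * (α - 2) = (α - 2) * (2 : ℕ) := by push_cast; ring
    rw [e, Real.rpow_mul (abs_nonneg _), Real.rpow_natCast, ← mul_pow]
  have hgood : ∀ᵐ p : ℝ × ℝ ∂(volume.restrict (TQ x)), 0 < p.1 ∧ 0 < p.2 ∧ p.1 ≠ p.2 := by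
    filter_upwards [diag_ae (TQ x), ae_restrict_mem hTQ] with p hp hm
    exact ⟨hm.1.1, hm.2.1, hp⟩
  have hFb : ∀ d e : ℕ, 1 ≤ d → 1 ≤ e → ∀ᵐ p : ℝ × ℝ ∂(volume.restrict (TQ x)),
      |FF β α φ f1 f2 d e p| ≤ K * |p.1 - p.2| ^ (α - 2) := by
    intro d e hd he
    filter_upwards [hgood] with p hp
    exact H.FF_bd hM0 hM hd he hp.1 hp.2.1 hp.2.2
  have hfb : ∀ᵐ p : ℝ × ℝ ∂(volume.restrict (TQ x)),
      |ff β lam α f1 f2 p| ≤ K * |p.1 - p.2| ^ (α - 2) := by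
    filter_upwards [hgood] with p hp
    refine le_of_tendsto (H.FF_lim hyp hp.1 hp.2.1).abs ?_
    filter_upwards [eventually_ge_atTop ((1, 1) : ℕ × ℕ)] with q hq
    exact H.FF_bd hM0 hM hq.1 hq.2 hp.1 hp.2.1 hp.2.2
  have hF : ∀ d e : ℕ, 1 ≤ d → 1 ≤ e → MemLp (FF β α φ f1 f2 d e) 2 (volume.restrict (TQ x)) := by
    intro d e hd he
    refine hdom.mono' (H.FF_meas φ d e).aestronglyMeasurable ?_
    simpa [Real.norm_eq_abs] using hFb d e hd he
  have hf : MemLp (ff β lam α f1 f2) 2 (volume.restrict (TQ x)) :=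
    hdom.mono' (H.ff_meas lam).aestronglyMeasurable (by simpa [Real.norm_eq_abs] using hfb)
  refine ⟨_, Qf_main hx hf hF ?_⟩
  have := tendsto_integral_filter_of_dominated_convergence (μ := volume.restrict (TQ x))
    (l := (atTop : Filter (ℕ × ℕ)))
    (F := fun q p => (FF β α φ f1 f2 q.1 q.2 p - ff β lam α f1 f2 p) ^ 2) (f := fun _ => (0:ℝ))
    (fun p => 4 * (K * |p.1 - p.2| ^ (α - 2)) ^ 2) ?_ ?_ ?_ ?_
  · simpa using this
  · filter_upwards with q
    exact (((H.FF_meas φ q.1 q.2).sub (H.ff_meas lam)).pow_const 2).aestronglyMeasurable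
  · filter_upwards [eventually_ge_atTop ((1, 1) : ℕ × ℕ)] with q hq
    filter_upwards [hFb q.1 q.2 hq.1 hq.2, hfb] with p h1 h2
    rw [Real.norm_eq_abs, abs_of_nonneg (sq_nonneg _)]
    have h3 := (abs_sub (FF β α φ f1 f2 q.1 q.2 p) (ff β lam α f1 f2 p)).trans (add_le_add h1 h2)
    have h4 := abs_nonneg (FF β α φ f1 f2 q.1 q.2 p - ff β lam α f1 f2 p)
    rw [← sq_abs]
    nlinarith
  · exact hdom.integrable_sq.const_mul 4
  · filter_upwards [hgood] with p hp
    have := ((H.FF_lim hyp hp.1 hp.2.1).sub_const (ff β lam α f1 f2 p)).pow 2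
    simpa using this

lemma Good.S_eq (H : Good β α C f f1 f2) {φ : ℝ → ℝ} (hφ : ∀ y, 1 ≤ y → φ y = f y)
    (hpos : ∀ k d : ℕ, 1 ≤ d → 0 < incR β φ d d k k)
    {x : ℝ} {d e : ℕ} (hd : 1 ≤ d) (he : 1 ≤ e) :
    Ssum β φ α x d e = Qf x d e (FF β α φ f1 f2 d e) := by
  have hd' : (0 : ℝ) < d := by exact_mod_cast hd
  have he' : (0 : ℝ) < e := by exact_mod_cast he
  have key : ∀ (d : ℕ) (k : ℕ), 1 ≤ d → ∀ s ∈ cel d k, vv β α φ d s =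
      Real.sqrt ((d : ℝ) ^ (2 * β - α) / incR β φ 1 1 k k) := by
    intro d k hd s hs
    have hd' : (0 : ℝ) < d := by exact_mod_cast hd
    unfold vv wf
    rw [cel_mem hd hs]
    congr 1
    have hk : (0 : ℝ) < (k : ℝ) + 1 := by positivity
    rw [Nat.add_sub_cancel, Real.rpow_neg (by positivity)]
    push_cast
    rw [Real.div_rpow hk.le hd'.le]
    have := (Real.rpow_pos_of_pos hk (2 * β - α)).ne'
    have := (Real.rpow_pos_of_pos hd' (2 * β - α)).ne'
    have := (hpos k 1 le_rfl).ne'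
    field_simp
  have pw : ∀ d : ℕ, 1 ≤ d → (d : ℝ) ^ (1 - α) = d * (d : ℝ) ^ (2 * β - α) * (d : ℝ) ^ (-(2 * β)) := by
    intro d hd
    have hd' : (0 : ℝ) < d := by exact_mod_cast hd
    rw [← Real.rpow_one_add' hd'.le (by linarith [H.hαβ]), ← Real.rpow_add hd']
    congr 1; ring
  unfold Ssum Qf idx
  rw [Finset.sum_product, Finset.mul_sum]
  refine Finset.sum_congr rfl fun k hk => ?_
  rw [Finset.mul_sum]
  refine Finset.sum_congr rfl fun l hl => ?_
  rw [Finset.mem_Icc] at hk hl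
  have hI : ∫ p in bx d e (k, l), FF β α φ f1 f2 d e p =
      Real.sqrt ((d : ℝ) ^ (2 * β - α) / incR β φ 1 1 k k) *
      Real.sqrt ((e : ℝ) ^ (2 * β - α) / incR β φ 1 1 l l) * incR β φ d e k l := by
    rw [H.inc_eq hφ hd he hk.1 hl.1, ← integral_const_mul]
    refine setIntegral_congr_fun (bx_meas d e (k, l)) ?_
    rintro ⟨s, t⟩ ⟨h1, h2⟩
    simp only [FF]
    rw [key d k hd s h1, key e l he t h2]
  have p1 := hpos k 1 le_rfl
  have p2 := hpos l 1 le_rfl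
  rw [hI, mul_pow, mul_pow, Real.sq_sqrt (by positivity), Real.sq_sqrt (by positivity),
    incR_hom hd (k := k), incR_hom he (k := l), pw d hd, pw e he]
  have q1 := (Real.rpow_pos_of_pos hd' (-(2 * β))).ne'
  have q2 := (Real.rpow_pos_of_pos he' (-(2 * β))).ne'
  have := p1.ne'
  have := p2.ne'
  field_simp

end fin

/-- for `3/2 < α < 2`, each sequence `(Ŵ_{ij}(⌊dx⌋))_{d ≥ 1}` is
Cauchy in `L²(Ω)`. -/
theorem hatW_cauchy_in_L2 (β lam α ν : ℝ) (φ ψ : ℝ → ℝ)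
    (hyp : SelfSimilarHyp β lam α ν φ ψ)
    (hα1 : 3 / 2 < α) (hα2 : α < 2)
    (a b x : ℝ) (ha : 0 < a) (hab : a < b) (hx : x ∈ Set.Icc a b)
    (n : ℕ) {Ω : Type*} [MeasurableSpace Ω] (P : Measure Ω) [IsProbabilityMeasure P]
    (X : Fin n → ℝ → Ω → ℝ)
    (hmeas : ∀ (i : Fin n) (t : ℝ), Measurable (X i t))
    (hgauss : IsCenteredGaussianFamily P (fun p : Fin n × ℝ => X p.1 p.2))
    (hcov : ∀ (i j : Fin n) (s t : ℝ), 0 ≤ s → 0 ≤ t →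
      ∫ ω, X i s ω * X j t ω ∂P = if i = j then covR β φ s t else 0)
    (hpos : ∀ (i : Fin n) (k d : ℕ), 1 ≤ d →
      0 < ∫ ω, (X i (((k : ℝ) + 1) / d) ω - X i ((k : ℝ) / d) ω) ^ 2 ∂P) :
    ∀ i j : Fin n, ∀ ε : ℝ, 0 < ε → ∃ N : ℕ, ∀ d₁ d₂ : ℕ, N ≤ d₁ → N ≤ d₂ →
      ∫ ω, (hatW P X α x d₁ i j ω - hatW P X α x d₂ i j ω) ^ 2 ∂P < ε := by
  intro i j ε hε
  obtain ⟨hp, c, hc⟩ := W_prod β α x φ X hgauss hcov hpos i j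
  obtain ⟨C, H⟩ := good_of_hyp hyp hα1 hα2
  have hφ := hyp.2.2.2.2.1
  have hx0 : 0 < x := lt_of_lt_of_le ha hx.1
  obtain ⟨L, hL⟩ := H.FF_main hyp hx0
  have hS : Tendsto (fun q : ℕ × ℕ => Ssum β φ α x q.1 q.2) atTop (nhds L) := by
    refine hL.congr' ?_
    filter_upwards [eventually_ge_atTop ((1, 1) : ℕ × ℕ)] with q hq
    exact (H.S_eq hφ hp hq.1 hq.2).symm
  have hδ : 0 < ε / (4 * (|c| + 1)) := by positivity
  obtain ⟨N, hN⟩ := Metric.tendsto_atTop.1 hS _ hδ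
  refine ⟨max (max N.1 N.2) 1, fun d e hd he => ?_⟩
  have hd1 : 1 ≤ d := le_trans (le_max_right _ _) hd
  have he1 : 1 ≤ e := le_trans (le_max_right _ _) he
  have hdN : max N.1 N.2 ≤ d := le_trans (le_max_left _ _) hd
  have heN : max N.1 N.2 ≤ e := le_trans (le_max_left _ _) he
  have hd2 := le_trans (le_max_left _ _) hdN
  have hd3 := le_trans (le_max_right _ _) hdN
  have he2 := le_trans (le_max_left _ _) heN
  have he3 := le_trans (le_max_right _ _) heN
  have a1 := hN (d, d) ⟨hd2, hd3⟩
  have a2 := hN (d, e) ⟨hd2, he3⟩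
  have a3 := hN (e, e) ⟨he2, he3⟩
  simp only [Real.dist_eq] at a1 a2 a3
  obtain ⟨i1, e1⟩ := hc d d hd1 hd1
  obtain ⟨i2, e2⟩ := hc d e hd1 he1
  obtain ⟨i3, e3⟩ := hc e e he1 he1
  have hE : ∫ ω, (hatW P X α x d i j ω - hatW P X α x e i j ω) ^ 2 ∂P =
      c * (Ssum β φ α x d d - 2 * Ssum β φ α x d e + Ssum β φ α x e e) := by
    have : ∀ ω, (hatW P X α x d i j ω - hatW P X α x e i j ω) ^ 2 =
        hatW P X α x d i j ω * hatW P X α x d i j ω -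
        2 * (hatW P X α x d i j ω * hatW P X α x e i j ω) +
        hatW P X α x e i j ω * hatW P X α x e i j ω := fun ω => by ring
    simp only [this]
    have i4 : Integrable (fun ω => hatW P X α x d i j ω * hatW P X α x d i j ω -
        2 * (hatW P X α x d i j ω * hatW P X α x e i j ω)) P := i1.sub (i2.const_mul 2)
    rw [integral_add i4 i3, integral_sub i1 (i2.const_mul 2),
      integral_const_mul, e1, e2, e3]
    ring
  rw [hE]
  have hb : |Ssum β φ α x d d - 2 * Ssum β φ α x d e + Ssum β φ α x e e| <
      4 * (ε / (4 * (|c| + 1))) := by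
    rw [abs_lt] at *
    constructor <;> linarith [a1.1, a1.2, a2.1, a2.2, a3.1, a3.2]
  have hc0 := abs_nonneg c
  calc _ ≤ |c| * |Ssum β φ α x d d - 2 * Ssum β φ α x d e + Ssum β φ α x e e| := by
        rw [← abs_mul]; exact le_abs_self _
    _ ≤ |c| * (4 * (ε / (4 * (|c| + 1)))) := by gcongr
    _ = ε * (|c| / (|c| + 1)) := by field_simp
    _ < ε * 1 := by
        gcongr
        rw [div_lt_one (by linarith)]; linarith
    _ = ε := mul_one ε
end
end

section
/- Assume either (α < 1 and α + ν > 2) or (1 < α < 3/2). Then there exists a constant C > 0 such that |δ_{kl}| ≤ C |a_α(k−l)| for all integers k, l ≥ 1. -/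
open MeasureTheory ProbabilityTheory Filter

noncomputable section

lemma aux_pow (q x ξ : ℝ) (hq : |q| ≤ 1) (hx : 1 ≤ x) (h1 : x ≤ ξ) (h2 : ξ ≤ x + 1) :
    |ξ ^ q - x ^ q| ≤ x ^ (q - 1) := by
  have hx0 : 0 < x := by linarith
  rcases eq_or_lt_of_le h1 with h | h
  · subst h
    simp only [sub_self, abs_zero]
    positivity
  obtain ⟨c, ⟨hc1, hc2⟩, hc⟩ := exists_hasDerivAt_eq_slope (fun y : ℝ => y ^ q)
    (fun y => q * y ^ (q - 1)) h
    (by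
      intro y hy
      exact (Real.hasDerivAt_rpow_const (Or.inl (by linarith [hy.1]))).continuousAt.continuousWithinAt)
    (by
      intro y hy
      exact Real.hasDerivAt_rpow_const (Or.inl (by linarith [hy.1])))
  have hne : ξ - x ≠ 0 := by linarith
  have e : ξ ^ q - x ^ q = q * c ^ (q - 1) * (ξ - x) := by
    rw [hc]; field_simp
  rw [e, abs_mul, abs_mul]
  have hq1 : q ≤ 1 := (abs_le.1 hq).2
  have i1 : |c ^ (q - 1)| ≤ x ^ (q - 1) := by
    rw [abs_of_pos (Real.rpow_pos_of_pos (by linarith) _)]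
    exact Real.rpow_le_rpow_of_nonpos hx0 hc1.le (by linarith)
  have i2 : |ξ - x| ≤ 1 := by rw [abs_of_pos (by linarith)]; linarith
  calc |q| * |c ^ (q - 1)| * |ξ - x| ≤ 1 * x ^ (q - 1) * 1 := by gcongr
    _ = _ := by ring

lemma aux_aFun (α : ℝ) (h0 : 0 < α) (h2 : α < 2) (h1 : α ≠ 1) :
    ∃ c : ℝ, 0 < c ∧ ∀ m : ℕ, 1 ≤ m → c * (m : ℝ) ^ (α - 2) ≤ |aFun α (m : ℤ)| := by
  refine ⟨|α| * |α - 1| * (2 : ℝ) ^ (α - 2) / 2, ?_, ?_⟩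
  · have : α - 1 ≠ 0 := sub_ne_zero.2 h1
    positivity
  intro m hm
  have hm' : (1 : ℝ) ≤ m := by exact_mod_cast hm
  obtain ⟨x, hx⟩ : ∃ x : ℝ, x = (m : ℝ) := ⟨_, rfl⟩
  rw [← hx] at hm' ⊢
  obtain ⟨ξ, ⟨k1, k2⟩, hξ⟩ := exists_hasDerivAt_eq_slope
    (fun y : ℝ => y ^ α - (y - 1) ^ α)
    (fun y => α * y ^ (α - 1) - α * (y - 1) ^ (α - 1)) (show x < x + 1 by linarith)
    (by
      apply Continuous.continuousOn
      exact (Real.continuous_rpow_const h0.le).sub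
        ((Real.continuous_rpow_const h0.le).comp (continuous_id.sub continuous_const)))
    (by
      intro y hy
      have a1 : HasDerivAt (fun y : ℝ => y ^ α) (α * y ^ (α - 1)) y :=
        Real.hasDerivAt_rpow_const (Or.inl (by linarith [hy.1]))
      have a2 : HasDerivAt (fun y : ℝ => (y - 1) ^ α) (1 * α * (y - 1) ^ (α - 1)) y :=
        ((hasDerivAt_id y).sub_const 1).rpow_const (Or.inl (by simp only [id]; linarith [hy.1]))
      rw [one_mul] at a2
      exact a1.sub a2)
  obtain ⟨η, ⟨k3, k4⟩, hη⟩ := exists_hasDerivAt_eq_slope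
    (fun y : ℝ => y ^ (α - 1)) (fun y => (α - 1) * y ^ (α - 1 - 1)) (show ξ - 1 < ξ by linarith)
    (by
      intro y hy
      exact (Real.hasDerivAt_rpow_const (Or.inl (by linarith [hy.1]))).continuousAt.continuousWithinAt)
    (by
      intro y hy
      exact Real.hasDerivAt_rpow_const (Or.inl (by linarith [hy.1])))
  have e : aFun α (m : ℤ) = α * ((α - 1) * η ^ (α - 2)) / 2 := by
    unfold aFun
    have e1 : α - 1 - 1 = α - 2 := by ring
    rw [e1] at hη
    rw [hη]
    have e2 : ξ - (ξ - 1) = 1 := by ring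
    have e3 : x + 1 - x = 1 := by ring
    rw [e3] at hξ
    rw [e2, div_one, mul_sub, hξ, div_one]
    push_cast
    rw [← hx, abs_of_pos (show 0 < x + 1 by linarith), abs_of_nonneg (show 0 ≤ x - 1 by linarith),
      abs_of_pos (show 0 < x by linarith)]
    rw [show x + 1 - 1 = x by ring]
    ring
  have hη0 : 0 < η := by linarith
  rw [e, abs_div, abs_mul, abs_mul, abs_of_pos (Real.rpow_pos_of_pos hη0 _), abs_two]
  have i : (2 * x) ^ (α - 2) ≤ η ^ (α - 2) :=
    Real.rpow_le_rpow_of_nonpos hη0 (by linarith) (by linarith)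
  rw [Real.mul_rpow (by norm_num) (by linarith)] at i
  have : 0 ≤ |α| * |α - 1| / 2 := by positivity
  nlinarith [mul_le_mul_of_nonneg_left i this]

lemma aFun_neg (α : ℝ) (m : ℤ) : aFun α (-m) = aFun α m := by
  unfold aFun
  push_cast
  rw [show -(m : ℝ) + 1 = -((m : ℝ) - 1) by ring, show -(m : ℝ) - 1 = -((m : ℝ) + 1) by ring]
  simp only [abs_neg]
  ring

lemma covR_symm (β : ℝ) (φ : ℝ → ℝ) (s t : ℝ) : covR β φ s t = covR β φ t s := by
  unfold covR
  simp only [min_comm s t, max_comm s t, or_comm (a := s = 0)]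

lemma covΔ_symm (β : ℝ) (φ : ℝ → ℝ) (k l : ℕ) : covΔ β φ k l = covΔ β φ l k := by
  unfold covΔ
  rw [covR_symm β φ (k + 1) (l + 1), covR_symm β φ k (l + 1), covR_symm β φ (k + 1) l,
    covR_symm β φ k l]
  ring

lemma covδ_symm (β : ℝ) (φ : ℝ → ℝ) (k l : ℕ) : covδ β φ k l = covδ β φ l k := by
  unfold covδ
  rw [covΔ_symm, mul_comm]

lemma covR_of_le (β : ℝ) (φ : ℝ → ℝ) (s t : ℝ) (hs : 0 < s) (hst : s ≤ t) :
    covR β φ t s = s ^ (2 * β) * φ (t / s) := by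
  unfold covR
  rw [if_neg (by push Not; constructor <;> linarith), min_eq_right hst, max_eq_left hst]

lemma aux_phi (β lam α ν : ℝ) (φ ψ : ℝ → ℝ)
    (hyp : SelfSimilarHyp β lam α ν φ ψ)
    (hcase : (α < 1 ∧ 2 < α + ν) ∨ (1 < α ∧ α < 3 / 2)) :
    ∃ K : ℝ, 0 < K ∧ ∀ y : ℝ, 1 < y → HasDerivAt φ (deriv φ y) y ∧
      HasDerivAt (deriv φ) (deriv (deriv φ) y) y ∧
      |deriv φ y| ≤ K * (y - 1) ^ (α - 2) ∧ y * |deriv (deriv φ) y| ≤ K * (y - 1) ^ (α - 2) := by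
  obtain ⟨hβ, hlam, hα, hν, hφ, ⟨S, hS, hSi, hSd⟩, ⟨C₀, hC₀, hb1, hb2⟩, -, C₁, hC₁, hb⟩ := hyp
  have hα0 : 0 < α := hα.1
  have hα2 : α < 3 / 2 := by rcases hcase with h | h <;> linarith
  have d1 : ∀ y : ℝ, 1 < y →
      HasDerivAt φ (-lam * (α * (y - 1) ^ (α - 1)) + deriv ψ y) y := by
    intro y hy
    have a2 : HasDerivAt (fun y : ℝ => (y - 1) ^ α) (1 * α * (y - 1) ^ (α - 1)) y :=
      ((hasDerivAt_id y).sub_const 1).rpow_const (Or.inl (by simp only [id]; linarith))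
    rw [one_mul] at a2
    refine HasDerivAt.congr_of_eventuallyEq
      ((a2.const_mul (-lam)).add (hSd y (hSi hy.le)).1.hasDerivAt) ?_
    filter_upwards [Ioi_mem_nhds hy] with z hz
    exact hφ z (le_of_lt hz)
  have d2 : ∀ y : ℝ, 1 < y → HasDerivAt (deriv φ)
      (-lam * (α * ((α - 1) * (y - 1) ^ (α - 2))) + deriv (deriv ψ) y) y := by
    intro y hy
    have a2 : HasDerivAt (fun y : ℝ => (y - 1) ^ (α - 1))
        (1 * (α - 1) * (y - 1) ^ (α - 1 - 1)) y :=
      ((hasDerivAt_id y).sub_const 1).rpow_const (Or.inl (by simp only [id]; linarith))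
    rw [one_mul, show α - 1 - 1 = α - 2 by ring] at a2
    refine HasDerivAt.congr_of_eventuallyEq
      (((a2.const_mul α).const_mul (-lam)).add (hSd y (hSi hy.le)).2.hasDerivAt) ?_
    filter_upwards [Ioi_mem_nhds hy] with z hz
    exact (d1 z hz).deriv
  refine ⟨2 * lam * α + 2 * C₀ + 2 * C₁, by positivity, ?_⟩
  intro y hy
  refine ⟨(d1 y hy).differentiableAt.hasDerivAt, (d2 y hy).differentiableAt.hasDerivAt, ?_⟩
  have hy0 : 0 < y - 1 := by linarith
  have hP : 0 < (y - 1) ^ (α - 2) := Real.rpow_pos_of_pos hy0 _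
  rcases le_total y 2 with hy2 | hy2
  · have i1 : (y - 1) ^ (α - 1) ≤ (y - 1) ^ (α - 2) :=
      Real.rpow_le_rpow_of_exponent_ge hy0 (by linarith) (by linarith)
    have i2 : 1 ≤ (y - 1) ^ (α - 2) :=
      Real.one_le_rpow_of_pos_of_le_one_of_nonpos hy0 (by linarith) (by linarith)
    have i3 : y ^ (α - 1) ≤ 2 := by
      calc y ^ (α - 1) ≤ y ^ (1 : ℝ) := Real.rpow_le_rpow_of_exponent_le hy.le (by linarith)
        _ ≤ 2 := by rw [Real.rpow_one]; exact hy2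
    have i0 : 0 < (y - 1) ^ (α - 1) := Real.rpow_pos_of_pos hy0 _
    have j1 := hb1 y hy
    have j2 := hb2 y hy
    have hla : 0 < lam * α := by positivity
    constructor
    · rw [(d1 y hy).deriv]
      calc |(-lam * (α * (y - 1) ^ (α - 1)) + deriv ψ y)|
          ≤ |(-lam * (α * (y - 1) ^ (α - 1)))| + |deriv ψ y| := abs_add_le _ _
        _ = lam * α * (y - 1) ^ (α - 1) + |deriv ψ y| := by
            rw [neg_mul, abs_neg, abs_of_pos (by positivity)]; ring
        _ ≤ lam * α * (y - 1) ^ (α - 2) + C₀ * (2 * (y - 1) ^ (α - 2)) := by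
            gcongr
            exact j1.trans (mul_le_mul_of_nonneg_left (by linarith) hC₀)
        _ ≤ _ := by nlinarith [mul_pos hla hP, mul_pos hC₁ hP]
    · rw [(d2 y hy).deriv]
      have hy' : 0 < y := by linarith
      have j3 : |deriv (deriv ψ) y| ≤ C₀ * (y - 1) ^ (α - 2) := by
        refine j2.trans ?_
        have : y⁻¹ ≤ 1 := inv_le_one_of_one_le₀ hy.le
        calc C₀ * y⁻¹ * (y - 1) ^ (α - 1) ≤ C₀ * 1 * (y - 1) ^ (α - 2) := by gcongr
          _ = _ := by ring
      have j4 : |(-lam * (α * ((α - 1) * (y - 1) ^ (α - 2))) + deriv (deriv ψ) y)|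
          ≤ lam * α * (y - 1) ^ (α - 2) + C₀ * (y - 1) ^ (α - 2) := by
        refine (abs_add_le _ _).trans (add_le_add ?_ j3)
        rw [neg_mul, abs_neg, abs_mul, abs_mul, abs_mul, abs_of_pos hlam, abs_of_pos hα0,
          abs_of_pos hP]
        have : |α - 1| ≤ 1 := by rw [abs_le]; constructor <;> linarith
        calc lam * (α * (|α - 1| * (y - 1) ^ (α - 2)))
            ≤ lam * (α * (1 * (y - 1) ^ (α - 2))) := by gcongr
          _ = _ := by ring
      calc _ ≤ 2 * (lam * α * (y - 1) ^ (α - 2) + C₀ * (y - 1) ^ (α - 2)) := by gcongr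
        _ ≤ _ := by nlinarith [mul_pos hC₁ hP]
  · have key : |deriv φ y| ≤ C₁ * (y - 1) ^ (α - 2) ∧
        |deriv (deriv φ) y| ≤ C₁ * (y - 1) ^ (α - 3) := by
      rcases hcase with h | h
      · obtain ⟨u, v⟩ := (hb y hy2).1 h.1
        refine ⟨u.trans ?_, v.trans ?_⟩
        · gcongr
          · linarith
          · linarith
        · refine mul_le_mul_of_nonneg_left ?_ hC₁.le
          exact Real.rpow_le_rpow_of_exponent_le (by linarith) (by linarith)
      · exact (hb y hy2).2 h.1.le
    have e : (y - 1) ^ (α - 2) = (y - 1) * (y - 1) ^ (α - 3) := by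
      rw [show α - 2 = 1 + (α - 3) by ring, Real.rpow_add hy0, Real.rpow_one]
    have hla : 0 < lam * α := by positivity
    have q1 := mul_pos hla hP
    have q2 := mul_nonneg hC₀ hP.le
    have q3 := mul_pos hC₁ hP
    constructor
    · nlinarith [key.1]
    · have : y * |deriv (deriv φ) y| ≤ (2 * (y - 1)) * (C₁ * (y - 1) ^ (α - 3)) := by
        apply mul_le_mul _ key.2 (abs_nonneg _) (by linarith)
        linarith
      have e2 : (2 * (y - 1)) * (C₁ * (y - 1) ^ (α - 3)) = 2 * (C₁ * (y - 1) ^ (α - 2)) := by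
        rw [e]; ring
      nlinarith

lemma aux_far (β α : ℝ) (φ : ℝ → ℝ) (hβ : β ∈ Set.Ioo (0 : ℝ) 1) (hα0 : 0 < α) (hα : α ≤ 2 * β)
    (hα2 : α < 2) (K : ℝ) (hK : 0 < K)
    (hφ : ∀ y : ℝ, 1 < y → HasDerivAt φ (deriv φ y) y ∧
      HasDerivAt (deriv φ) (deriv (deriv φ) y) y ∧
      |deriv φ y| ≤ K * (y - 1) ^ (α - 2) ∧ y * |deriv (deriv φ) y| ≤ K * (y - 1) ^ (α - 2))
    (a b : ℝ) (ha : 1 ≤ a) (hab : a + 2 ≤ b) :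
    |((a + 1) ^ (2 * β) * (φ ((b + 1) / (a + 1)) - φ (b / (a + 1)))) -
      (a ^ (2 * β) * (φ ((b + 1) / a) - φ (b / a)))| ≤
      2 * K * 2 ^ (2 * β - α) * 2 ^ (2 - α) * (a ^ (2 * β - α) * (b - a) ^ (α - 2)) := by
  have hd : ∀ t s : ℝ, a ≤ s → s < t →
      HasDerivAt (fun s : ℝ => s ^ (2 * β) * φ (t / s))
        (2 * β * s ^ (2 * β - 1) * φ (t / s) + s ^ (2 * β) * (deriv φ (t / s) * (-t / s ^ 2))) s := by
    intro t s hs hst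
    have hs0 : 0 < s := by linarith
    have h1 : HasDerivAt (fun s : ℝ => s ^ (2 * β)) (2 * β * s ^ (2 * β - 1)) s :=
      Real.hasDerivAt_rpow_const (Or.inl hs0.ne')
    have h2 : HasDerivAt (fun s : ℝ => t / s) (-t / s ^ 2) s := by
      have := (hasDerivAt_const s t).div (hasDerivAt_id s) hs0.ne'
      refine this.congr_deriv ?_
      simp only [id, zero_mul, mul_one, zero_sub]
    have h3 : HasDerivAt (fun s : ℝ => φ (t / s)) (deriv φ (t / s) * (-t / s ^ 2)) s :=
      HasDerivAt.comp s (hφ (t / s) ((one_lt_div hs0).2 hst)).1 h2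
    exact h1.mul h3
  have hd' : ∀ s ∈ Set.Icc a (a + 1), HasDerivAt
      (fun s : ℝ => s ^ (2 * β) * φ ((b + 1) / s) - s ^ (2 * β) * φ (b / s)) _ s := fun s hs =>
    (hd (b + 1) s hs.1 (by linarith [hs.2])).sub (hd b s hs.1 (by linarith [hs.2]))
  obtain ⟨s, hs, hse⟩ := exists_hasDerivAt_eq_slope _ _ (show a < a + 1 by linarith)
    (fun s hs => (hd' s hs).continuousAt.continuousWithinAt)
    (fun s hs => hd' s ⟨hs.1.le, hs.2.le⟩)
  obtain ⟨hs1, hs2⟩ := hs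
  have hs0 : 0 < s := by linarith
  have hg : ∀ t ∈ Set.Icc b (b + 1), HasDerivAt
      (fun t : ℝ => 2 * β * s ^ (2 * β - 1) * φ (t / s)
        + s ^ (2 * β) * (deriv φ (t / s) * (-t / s ^ 2)))
      (2 * β * s ^ (2 * β - 1) * (deriv φ (t / s) * (1 / s))
        + s ^ (2 * β) * (deriv (deriv φ) (t / s) * (1 / s) * (-t / s ^ 2)
          + deriv φ (t / s) * (-1 / s ^ 2))) t := by
    intro t ht
    have hts : 1 < t / s := (one_lt_div hs0).2 (by linarith [ht.1])
    have h2 : HasDerivAt (fun t : ℝ => t / s) (1 / s) t := (hasDerivAt_id t).div_const s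
    have h3 : HasDerivAt (fun t : ℝ => φ (t / s)) (deriv φ (t / s) * (1 / s)) t :=
      HasDerivAt.comp t (hφ (t / s) hts).1 h2
    have h4 : HasDerivAt (fun t : ℝ => deriv φ (t / s)) (deriv (deriv φ) (t / s) * (1 / s)) t :=
      HasDerivAt.comp (h₂ := deriv φ) t (hφ (t / s) hts).2.1 h2
    have h5 : HasDerivAt (fun t : ℝ => -t / s ^ 2) (-1 / s ^ 2) t :=
      (hasDerivAt_id t).neg.div_const (s ^ 2)
    exact (h3.const_mul _).add ((h4.mul h5).const_mul _)
  obtain ⟨t, ht, hte⟩ := exists_hasDerivAt_eq_slope _ _ (show b < b + 1 by linarith)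
    (fun t ht => (hg t ht).continuousAt.continuousWithinAt)
    (fun t ht => hg t ⟨ht.1.le, ht.2.le⟩)
  obtain ⟨ht1, ht2⟩ := ht
  rw [show b + 1 - b = 1 by ring, div_one] at hte
  rw [show a + 1 - a = 1 by ring, div_one] at hse
  have hts : 1 < t / s := (one_lt_div hs0).2 (by linarith)
  have hkey : ((a + 1) ^ (2 * β) * (φ ((b + 1) / (a + 1)) - φ (b / (a + 1)))) -
      (a ^ (2 * β) * (φ ((b + 1) / a) - φ (b / a))) =
      s ^ (2 * β - 2) * ((2 * β - 1) * deriv φ (t / s) - (t / s) * deriv (deriv φ) (t / s)) := by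
    have e1 : ((a + 1) ^ (2 * β) * (φ ((b + 1) / (a + 1)) - φ (b / (a + 1)))) -
      (a ^ (2 * β) * (φ ((b + 1) / a) - φ (b / a))) = 2 * β * s ^ (2 * β - 1) * (deriv φ (t / s) * (1 / s))
        + s ^ (2 * β) * (deriv (deriv φ) (t / s) * (1 / s) * (-t / s ^ 2)
          + deriv φ (t / s) * (-1 / s ^ 2)) := by
      rw [hte]
      linear_combination -hse
    rw [e1]
    have p1 : s ^ (2 * β - 1) = s ^ (2 * β - 2) * s := by
      rw [show 2 * β - 1 = (2 * β - 2) + 1 by ring, Real.rpow_add hs0, Real.rpow_one]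
    have p2 : s ^ (2 * β) = s ^ (2 * β - 2) * s ^ 2 := by
      rw [← Real.rpow_natCast s 2, ← Real.rpow_add hs0]
      congr 1
      push_cast
      ring
    rw [p1, p2]
    field_simp
    ring
  rw [hkey]
  obtain ⟨-, -, b1, b2⟩ := hφ (t / s) hts
  have hβ1 : |2 * β - 1| ≤ 1 := by rw [abs_le]; constructor <;> linarith [hβ.1, hβ.2]
  have hQ : |(2 * β - 1) * deriv φ (t / s) - (t / s) * deriv (deriv φ) (t / s)| ≤
      2 * K * (t / s - 1) ^ (α - 2) := by
    refine (abs_sub _ _).trans ?_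
    rw [abs_mul, abs_mul, abs_of_pos (show 0 < t / s by linarith)]
    have := mul_le_mul hβ1 b1 (abs_nonneg _) zero_le_one
    linarith
  rw [abs_mul, abs_of_pos (Real.rpow_pos_of_pos hs0 _)]
  have hts' : 0 < t - s := by linarith
  have e3 : (t / s - 1) ^ (α - 2) = (t - s) ^ (α - 2) * s ^ (2 - α) := by
    rw [show t / s - 1 = (t - s) / s by field_simp, Real.div_rpow hts'.le hs0.le,
      show 2 - α = -(α - 2) by ring, Real.rpow_neg hs0.le]
    rfl
  have e4 : s ^ (2 * β - 2) * s ^ (2 - α) = s ^ (2 * β - α) := by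
    rw [← Real.rpow_add hs0]; congr 1; ring
  have e5 : s ^ (2 * β - α) ≤ 2 ^ (2 * β - α) * a ^ (2 * β - α) := by
    rw [← Real.mul_rpow (by norm_num) (by linarith)]
    exact Real.rpow_le_rpow hs0.le (by linarith) (by linarith)
  have e6 : (t - s) ^ (α - 2) ≤ 2 ^ (2 - α) * (b - a) ^ (α - 2) := by
    have : (2 : ℝ) ^ (2 - α) * (b - a) ^ (α - 2) = ((b - a) / 2) ^ (α - 2) := by
      rw [Real.div_rpow (by linarith) (by norm_num), show 2 - α = -(α - 2) by ring,
        Real.rpow_neg (by norm_num)]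
      field_simp
    rw [this]
    exact Real.rpow_le_rpow_of_nonpos (by linarith) (by linarith) (by linarith)
  calc _ ≤ s ^ (2 * β - 2) * (2 * K * (t / s - 1) ^ (α - 2)) := by gcongr
    _ = 2 * K * (s ^ (2 * β - α) * (t - s) ^ (α - 2)) := by rw [e3, ← e4]; ring
    _ ≤ 2 * K * ((2 ^ (2 * β - α) * a ^ (2 * β - α)) * (2 ^ (2 - α) * (b - a) ^ (α - 2))) := by
        have : 0 ≤ (t - s) ^ (α - 2) := (Real.rpow_pos_of_pos hts' _).le
        have : 0 < a := by linarith
        gcongr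
    _ = _ := by ring

lemma aux_psi (β lam α ν : ℝ) (φ ψ : ℝ → ℝ)
    (hyp : SelfSimilarHyp β lam α ν φ ψ) (hα2 : α < 2) :
    ∃ M : ℝ, 0 < M ∧ (∀ y : ℝ, 1 ≤ y → HasDerivAt ψ (deriv ψ y) y) ∧
      (∀ y : ℝ, 1 < y → y ≤ 3 → |deriv ψ y| ≤ M) ∧
      (1 ≤ α → ∀ y : ℝ, 1 < y → y ≤ 3 → |deriv ψ y - deriv ψ 1| ≤ M * (y - 1)) := by
  obtain ⟨hβ, hlam, hα, hν, hφ, ⟨S, hS, hSi, hSd⟩, ⟨C₀, hC₀, hb1, hb2⟩, -, -⟩ := hyp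
  refine ⟨3 * C₀ + 1, by positivity, fun y hy => (hSd y (hSi hy)).1.hasDerivAt, ?_, ?_⟩
  · intro y hy hy3
    have i3 : y ^ (α - 1) ≤ 3 := by
      calc y ^ (α - 1) ≤ y ^ (1 : ℝ) := Real.rpow_le_rpow_of_exponent_le hy.le (by linarith)
        _ ≤ 3 := by rw [Real.rpow_one]; exact hy3
    have := mul_le_mul_of_nonneg_left i3 hC₀
    linarith [hb1 y hy]
  · intro h1 y hy hy3
    obtain ⟨c, ⟨hc1, hc2⟩, hc⟩ := exists_hasDerivAt_eq_slope (deriv ψ) (deriv (deriv ψ)) hy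
      (fun z hz => (hSd z (hSi hz.1)).2.continuousAt.continuousWithinAt)
      (fun z hz => (hSd z (hSi hz.1.le)).2.hasDerivAt)
    have hy0 : 0 < y - 1 := by linarith
    have e : deriv ψ y - deriv ψ 1 = deriv (deriv ψ) c * (y - 1) := by
      rw [hc]; field_simp
    rw [e, abs_mul, abs_of_pos hy0]
    refine mul_le_mul_of_nonneg_right ?_ hy0.le
    have i1 : (c - 1) ^ (α - 1) ≤ 2 := by
      calc (c - 1) ^ (α - 1) ≤ 2 ^ (α - 1) :=
            Real.rpow_le_rpow (by linarith) (by linarith) (by linarith)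
        _ ≤ (2 : ℝ) ^ (1 : ℝ) := Real.rpow_le_rpow_of_exponent_le (by norm_num) (by linarith)
        _ = 2 := Real.rpow_one 2
    have i0 : 0 < (c - 1) ^ (α - 1) := Real.rpow_pos_of_pos (by linarith) _
    have i2 : c⁻¹ ≤ 1 := inv_le_one_of_one_le₀ hc1.le
    have i4 : 0 ≤ c⁻¹ := inv_nonneg.2 (by linarith)
    calc _ ≤ C₀ * c⁻¹ * (c - 1) ^ (α - 1) := hb2 c hc1
      _ ≤ C₀ * 1 * 2 := by gcongr
      _ ≤ _ := by linarith

lemma aux_near (β lam α ν : ℝ) (φ ψ : ℝ → ℝ)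
    (hyp : SelfSimilarHyp β lam α ν φ ψ) (hα2 : α < 2) :
    ∃ C : ℝ, 0 < C ∧ ∀ a : ℝ, 1 ≤ a →
      |((a + 1) ^ (2 * β) * (φ ((a + 2) / (a + 1)) - φ 1)) -
      (a ^ (2 * β) * (φ ((a + 2) / a) - φ ((a + 1) / a)))| ≤ C * a ^ (2 * β - α) := by
  obtain ⟨M, hM, hd, hB, hL⟩ := aux_psi β lam α ν φ ψ hyp hα2
  obtain ⟨hβ, hlam, hα, hν, hφ, -, -, -, -⟩ := hyp
  obtain ⟨hα0, hαβ⟩ := hα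
  refine ⟨lam * 4 + lam * 4 + 4 * M, by positivity, ?_⟩
  intro a ha
  have ha0 : 0 < a := by linarith
  have ha1 : 0 < a + 1 := by linarith
  have o1 : 1 < (a + 2) / (a + 1) := (one_lt_div ha1).2 (by linarith)
  have o2 : 1 < (a + 1) / a := (one_lt_div ha0).2 (by linarith)
  have o3 : (a + 1) / a < (a + 2) / a := by gcongr; linarith
  have o4 : (a + 2) / a ≤ 3 := by rw [div_le_iff₀ ha0]; linarith
  have o5 : (a + 2) / (a + 1) ≤ 3 := by rw [div_le_iff₀ ha1]; linarith
  obtain ⟨x, ⟨hx1, hx2⟩, hx⟩ := exists_hasDerivAt_eq_slope ψ (deriv ψ) o1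
      (fun z hz => (hd z hz.1).continuousAt.continuousWithinAt)
      (fun z hz => hd z hz.1.le)
  obtain ⟨y, ⟨hy1, hy2⟩, hy⟩ := exists_hasDerivAt_eq_slope ψ (deriv ψ) o3
      (fun z hz => (hd z (o2.le.trans hz.1)).continuousAt.continuousWithinAt)
      (fun z hz => hd z (o2.le.trans hz.1.le))
  have s1 : (a + 2) / (a + 1) - 1 = 1 / (a + 1) := by field_simp; ring
  have s2 : (a + 2) / a - (a + 1) / a = 1 / a := by field_simp; ring
  have s3 : (a + 1) / a - 1 = 1 / a := by field_simp; ring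
  have s4 : (a + 2) / a - 1 = 2 / a := by field_simp; ring
  rw [s1] at hx
  rw [s2] at hy
  have hx' : ψ ((a + 2) / (a + 1)) - ψ 1 = deriv ψ x / (a + 1) := by rw [hx]; field_simp
  have hy' : ψ ((a + 2) / a) - ψ ((a + 1) / a) = deriv ψ y / a := by rw [hy]; field_simp
  have p1 : ∀ z : ℝ, 0 < z → z ^ (2 * β) = z ^ (2 * β - 1) * z := by
    intro z hz
    rw [← Real.rpow_add_one hz.ne']; congr 1; ring
  have p2 : ∀ z : ℝ, 0 < z → z ^ (2 * β) = z ^ (2 * β - α) * z ^ α := by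
    intro z hz
    rw [← Real.rpow_add hz]; congr 1; ring
  rw [hφ _ o1.le, hφ 1 le_rfl, hφ _ (o2.le.trans o3.le), hφ _ o2.le, s1, s3, s4, sub_self,
    Real.zero_rpow hα0.ne', Real.div_rpow zero_le_one ha1.le, Real.div_rpow zero_le_one ha0.le,
    Real.div_rpow zero_le_two ha0.le, Real.one_rpow]
  have hA : 0 < a ^ α := Real.rpow_pos_of_pos ha0 _
  have hA1 : 0 < (a + 1) ^ α := Real.rpow_pos_of_pos ha1 _
  have key : (a + 1) ^ (2 * β) * (-lam * (1 / (a + 1) ^ α) + ψ ((a + 2) / (a + 1)) -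
      (-lam * 0 + ψ 1)) - a ^ (2 * β) * (-lam * (2 ^ α / a ^ α) + ψ ((a + 2) / a) -
      (-lam * (1 / a ^ α) + ψ ((a + 1) / a))) =
      -(lam * (a + 1) ^ (2 * β - α)) + lam * (2 ^ α - 1) * a ^ (2 * β - α) +
      ((a + 1) ^ (2 * β - 1) * deriv ψ x - a ^ (2 * β - 1) * deriv ψ y) := by
    have t1 : (a + 1) ^ (2 * β) * (1 / (a + 1) ^ α) = (a + 1) ^ (2 * β - α) := by
      rw [p2 _ ha1]; field_simp
    have t2 : a ^ (2 * β) * (1 / a ^ α) = a ^ (2 * β - α) := by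
      rw [p2 _ ha0]; field_simp
    have t3 : (a + 1) ^ (2 * β) * (ψ ((a + 2) / (a + 1)) - ψ 1) =
        (a + 1) ^ (2 * β - 1) * deriv ψ x := by
      rw [hx', p1 _ ha1]; field_simp
    have t4 : a ^ (2 * β) * (ψ ((a + 2) / a) - ψ ((a + 1) / a)) =
        a ^ (2 * β - 1) * deriv ψ y := by
      rw [hy', p1 _ ha0]; field_simp
    linear_combination (-lam) * t1 + lam * (2 ^ α - 1) * t2 + t3 - t4
  rw [key]
  set P := a ^ (2 * β - α) with hP
  have hP0 : 0 < P := Real.rpow_pos_of_pos ha0 _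
  have r1 : (a + 1) ^ (2 * β - α) ≤ 4 * P := by
    calc (a + 1) ^ (2 * β - α) ≤ (2 * a) ^ (2 * β - α) :=
          Real.rpow_le_rpow ha1.le (by linarith) (by linarith)
      _ = 2 ^ (2 * β - α) * P := Real.mul_rpow (by norm_num) ha0.le
      _ ≤ 2 ^ (2 : ℝ) * P := by
          gcongr
          · norm_num
          · linarith [hβ.2]
      _ = 4 * P := by norm_num
  have r2 : (2 : ℝ) ^ α ≤ 4 := by
    calc (2 : ℝ) ^ α ≤ 2 ^ (2 : ℝ) :=
          Real.rpow_le_rpow_of_exponent_le (by norm_num) hα2.le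
      _ = 4 := by norm_num
  have r3 : (1 : ℝ) ≤ 2 ^ α := Real.one_le_rpow (by norm_num) hα0.le
  have r4 : |-(lam * (a + 1) ^ (2 * β - α))| ≤ lam * 4 * P := by
    rw [abs_neg, abs_of_pos (by positivity)]
    nlinarith
  have r5 : |lam * (2 ^ α - 1) * P| ≤ lam * 4 * P := by
    rw [abs_mul, abs_mul, abs_of_pos hlam, abs_of_pos hP0, abs_of_nonneg (by linarith)]
    gcongr
    linarith
  have hq : |2 * β - 1| ≤ 1 := by rw [abs_le]; constructor <;> linarith [hβ.1, hβ.2]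
  have hpow := aux_pow (2 * β - 1) a (a + 1) hq ha (by linarith) le_rfl
  have hbx := hB x hx1 (hx2.le.trans o5)
  have hby := hB y (o2.trans hy1) (hy2.le.trans o4)
  have hq0 : 0 < a ^ (2 * β - 1) := Real.rpow_pos_of_pos ha0 _
  have hq1 : 0 < a ^ (2 * β - 1 - 1) := Real.rpow_pos_of_pos ha0 _
  have hqq : a ^ (2 * β - 1 - 1) ≤ a ^ (2 * β - 1) :=
    Real.rpow_le_rpow_of_exponent_le ha (by linarith)
  have r6 : |(a + 1) ^ (2 * β - 1) * deriv ψ x - a ^ (2 * β - 1) * deriv ψ y| ≤ 4 * M * P := by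
    have e : (a + 1) ^ (2 * β - 1) * deriv ψ x - a ^ (2 * β - 1) * deriv ψ y =
      ((a + 1) ^ (2 * β - 1) - a ^ (2 * β - 1)) * deriv ψ x +
        a ^ (2 * β - 1) * (deriv ψ x - deriv ψ y) := by ring
    rw [e]
    refine (abs_add_le _ _).trans ?_
    rw [abs_mul, abs_mul, abs_of_pos hq0]
    have u1 := mul_le_mul hpow hbx (abs_nonneg _) hq1.le
    rcases lt_or_ge α 1 with h | h
    · have w : a ^ (2 * β - 1) ≤ P := Real.rpow_le_rpow_of_exponent_le ha (by linarith)
      have u2 : |deriv ψ x - deriv ψ y| ≤ 2 * M := (abs_sub _ _).trans (by linarith)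
      have u3 := mul_le_mul w u2 (abs_nonneg _) hP0.le
      have u4 := mul_le_mul_of_nonneg_right (hqq.trans w) hM.le
      linarith [mul_pos hM hP0]
    · have w : a ^ (2 * β - 1 - 1) ≤ P := Real.rpow_le_rpow_of_exponent_le ha (by linarith)
      have l1 := hL h x hx1 (hx2.le.trans o5)
      have l2 := hL h y (o2.trans hy1) (hy2.le.trans o4)
      have v1 : x - 1 ≤ 1 / a := by
        have : 1 / (a + 1) ≤ 1 / a := one_div_le_one_div_of_le ha0 (by linarith)
        linarith
      have v2 : y - 1 ≤ 2 / a := by linarith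
      have u2 : |deriv ψ x - deriv ψ y| ≤ 3 * M * (1 / a) := by
        have e2 : deriv ψ x - deriv ψ y = (deriv ψ x - deriv ψ 1) - (deriv ψ y - deriv ψ 1) := by
          ring
        rw [e2]
        refine (abs_sub _ _).trans ?_
        have q1 := mul_le_mul_of_nonneg_left v1 hM.le
        have q2 := mul_le_mul_of_nonneg_left v2 hM.le
        have : 2 / a = 2 * (1 / a) := by ring
        rw [this] at q2
        linarith
      have u3 := mul_le_mul_of_nonneg_left u2 hq0.le
      have e3 : a ^ (2 * β - 1) * (3 * M * (1 / a)) = 3 * M * a ^ (2 * β - 1 - 1) := by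
        rw [Real.rpow_sub_one ha0.ne' (2 * β - 1)]; ring
      have u4 := mul_le_mul_of_nonneg_right w hM.le
      rw [e3] at u3
      linarith
  have := abs_add_three (-(lam * (a + 1) ^ (2 * β - α))) (lam * (2 ^ α - 1) * P)
    ((a + 1) ^ (2 * β - 1) * deriv ψ x - a ^ (2 * β - 1) * deriv ψ y)
  linarith

lemma aux_diag (β lam α ν : ℝ) (φ ψ : ℝ → ℝ)
    (hyp : SelfSimilarHyp β lam α ν φ ψ) (hα2 : α < 2) (hα1 : α ≠ 1) :
    ∃ C e : ℝ, 0 < C ∧ 0 < e ∧ ∀ a : ℝ, 1 ≤ a →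
      |((a + 1) ^ (2 * β) * φ 1 - 2 * (a ^ (2 * β) * φ ((a + 1) / a)) + a ^ (2 * β) * φ 1)
        - 2 * lam * a ^ (2 * β - α)| ≤ C * a ^ (2 * β - α - e) := by
  obtain ⟨M, hM, hd, hB, hL⟩ := aux_psi β lam α ν φ ψ hyp hα2
  obtain ⟨hβ, hlam, hα, hν, hφ, -, -, hc, -⟩ := hyp
  obtain ⟨hα0, hαβ⟩ := hα
  have hq : |2 * β - 1| ≤ 1 := by rw [abs_le]; constructor <;> linarith [hβ.1, hβ.2]
  have main : ∀ a : ℝ, 1 ≤ a → ∃ ξ η : ℝ, a ≤ ξ ∧ ξ ≤ a + 1 ∧ 1 < η ∧ η ≤ 3 ∧ η - 1 ≤ 1 / a ∧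
      ((a + 1) ^ (2 * β) * φ 1 - 2 * (a ^ (2 * β) * φ ((a + 1) / a)) + a ^ (2 * β) * φ 1)
        - 2 * lam * a ^ (2 * β - α) =
      2 * β * ψ 1 * (ξ ^ (2 * β - 1) - a ^ (2 * β - 1)) +
        2 * a ^ (2 * β - 1) * (β * ψ 1 - deriv ψ η) := by
    intro a ha
    have ha0 : 0 < a := by linarith
    have o2 : 1 < (a + 1) / a := (one_lt_div ha0).2 (by linarith)
    have s3 : (a + 1) / a - 1 = 1 / a := by field_simp; ring
    have o4 : (a + 1) / a ≤ 3 := by rw [div_le_iff₀ ha0]; linarith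
    obtain ⟨η, ⟨hη1, hη2⟩, hη⟩ := exists_hasDerivAt_eq_slope ψ (deriv ψ) o2
      (fun z hz => (hd z hz.1).continuousAt.continuousWithinAt)
      (fun z hz => hd z hz.1.le)
    obtain ⟨ξ, ⟨hξ1, hξ2⟩, hξ⟩ := exists_hasDerivAt_eq_slope (fun y : ℝ => y ^ (2 * β))
      (fun y => 2 * β * y ^ (2 * β - 1)) (show a < a + 1 by linarith)
      (by
        intro y hy
        exact (Real.hasDerivAt_rpow_const
          (Or.inl (by linarith [hy.1]))).continuousAt.continuousWithinAt)
      (by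
        intro y hy
        exact Real.hasDerivAt_rpow_const (Or.inl (by linarith [hy.1])))
    refine ⟨ξ, η, hξ1.le, hξ2.le, hη1, by linarith, by linarith, ?_⟩
    rw [show a + 1 - a = 1 by ring, div_one] at hξ
    rw [s3] at hη
    have hη' : ψ ((a + 1) / a) - ψ 1 = deriv ψ η / a := by rw [hη]; field_simp
    rw [hφ 1 le_rfl, hφ _ o2.le, s3, sub_self, Real.zero_rpow hα0.ne',
      Real.div_rpow zero_le_one ha0.le, Real.one_rpow]
    have hA : 0 < a ^ α := Real.rpow_pos_of_pos ha0 _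
    have t2 : a ^ (2 * β) * (1 / a ^ α) = a ^ (2 * β - α) := by
      rw [Real.rpow_sub ha0]; ring
    have t4 : a ^ (2 * β) * (ψ ((a + 1) / a) - ψ 1) = a ^ (2 * β - 1) * deriv ψ η := by
      rw [hη', Real.rpow_sub_one ha0.ne']; ring
    linear_combination 2 * lam * t2 - 2 * t4 - ψ 1 * hξ
  rcases lt_or_gt_of_ne hα1 with h | h
  · refine ⟨2 * |ψ 1| + 2 * (|ψ 1| + M), 1 - α, by positivity, by linarith, ?_⟩
    intro a ha
    have ha0 : 0 < a := by linarith
    obtain ⟨ξ, η, h1, h2, h3, h4, h5, e⟩ := main a ha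
    rw [e, show 2 * β - α - (1 - α) = 2 * β - 1 by ring]
    have hpow := aux_pow (2 * β - 1) a ξ hq ha h1 h2
    have hq0 : 0 < a ^ (2 * β - 1) := Real.rpow_pos_of_pos ha0 _
    have hqq : a ^ (2 * β - 1 - 1) ≤ a ^ (2 * β - 1) :=
      Real.rpow_le_rpow_of_exponent_le ha (by linarith)
    have hb := hB η h3 h4
    have g1 : |2 * β * ψ 1 * (ξ ^ (2 * β - 1) - a ^ (2 * β - 1))| ≤
        2 * |ψ 1| * a ^ (2 * β - 1) := by
      rw [abs_mul, abs_mul, abs_of_pos (show 0 < 2 * β by linarith [hβ.1])]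
      have := hβ.2.le
      have := hpow.trans hqq
      calc _ ≤ 2 * 1 * |ψ 1| * a ^ (2 * β - 1) := by gcongr
        _ = _ := by ring
    have g2 : |2 * a ^ (2 * β - 1) * (β * ψ 1 - deriv ψ η)| ≤
        2 * a ^ (2 * β - 1) * (|ψ 1| + M) := by
      rw [abs_mul, abs_of_pos (by positivity)]
      gcongr
      refine (abs_sub _ _).trans (add_le_add ?_ hb)
      rw [abs_mul, abs_of_pos hβ.1]
      nlinarith [abs_nonneg (ψ 1), hβ.2]
    refine (abs_add_le _ _).trans ?_
    linarith
  · refine ⟨2 * |ψ 1| + 2 * M, 2 - α, by positivity, by linarith, ?_⟩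
    intro a ha
    have ha0 : 0 < a := by linarith
    obtain ⟨ξ, η, h1, h2, h3, h4, h5, e⟩ := main a ha
    rw [e, show 2 * β - α - (2 - α) = 2 * β - 1 - 1 by ring, ← hc h.le]
    have hpow := aux_pow (2 * β - 1) a ξ hq ha h1 h2
    have hq0 : 0 < a ^ (2 * β - 1) := Real.rpow_pos_of_pos ha0 _
    have hl := hL h.le η h3 h4
    have g1 : |2 * β * ψ 1 * (ξ ^ (2 * β - 1) - a ^ (2 * β - 1))| ≤
        2 * |ψ 1| * a ^ (2 * β - 1 - 1) := by
      rw [abs_mul, abs_mul, abs_of_pos (show 0 < 2 * β by linarith [hβ.1])]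
      have := hβ.2.le
      calc _ ≤ 2 * 1 * |ψ 1| * a ^ (2 * β - 1 - 1) := by gcongr
        _ = _ := by ring
    have g2 : |2 * a ^ (2 * β - 1) * (deriv ψ 1 - deriv ψ η)| ≤
        2 * M * a ^ (2 * β - 1 - 1) := by
      rw [abs_mul, abs_of_pos (by positivity), abs_sub_comm]
      calc _ ≤ 2 * a ^ (2 * β - 1) * (M * (1 / a)) := by
            have := mul_le_mul_of_nonneg_left h5 hM.le
            gcongr
            linarith
        _ = _ := by rw [Real.rpow_sub_one ha0.ne' (2 * β - 1)]; ring
    refine (abs_add_le _ _).trans ?_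
    linarith

lemma aux_min (f g : ℕ → ℝ) (hf : ∀ k, 0 < f k) (c : ℝ) (hc : 0 < c) (N : ℕ) :
    (∀ k, N ≤ k → c * g k ≤ f k) → (∀ k, 1 ≤ k → 0 < g k) →
    ∃ c' : ℝ, 0 < c' ∧ ∀ k, 1 ≤ k → c' * g k ≤ f k := by
  induction N generalizing c with
  | zero => exact fun h _ => ⟨c, hc, fun k _ => h k (Nat.zero_le _)⟩
  | succ n ih =>
    intro h hg
    rcases Nat.eq_zero_or_pos n with h0 | h0
    · subst h0
      exact ⟨c, hc, fun k hk => h k (by omega)⟩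
    have hgn := hg n h0
    refine ih (min c (f n / g n)) (lt_min hc (div_pos (hf n) hgn)) ?_ hg
    intro k hk
    rcases eq_or_lt_of_le hk with e | e
    · subst e
      calc min c (f n / g n) * g n ≤ f n / g n * g n := by gcongr; exact min_le_right _ _
        _ = f n := by field_simp
    · have := hg k (by omega)
      calc min c (f n / g n) * g k ≤ c * g k := by gcongr; exact min_le_left _ _
        _ ≤ f k := h k e

lemma aux_lower (β lam α ν : ℝ) (φ ψ : ℝ → ℝ)
    (hyp : SelfSimilarHyp β lam α ν φ ψ) (hα2 : α < 2) (hα1 : α ≠ 1)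
    (hΔ : ∀ k : ℕ, 0 < covΔ β φ k k) :
    ∃ c : ℝ, 0 < c ∧ ∀ k : ℕ, 1 ≤ k → c * (k : ℝ) ^ (2 * β - α) ≤ covΔ β φ k k := by
  obtain ⟨C, e, hC, he, hb⟩ := aux_diag β lam α ν φ ψ hyp hα2 hα1
  have hlam : 0 < lam := hyp.2.1
  have ht : Tendsto (fun k : ℕ => C * (k : ℝ) ^ (-e)) atTop (nhds (C * 0)) :=
    ((tendsto_rpow_neg_atTop he).comp tendsto_natCast_atTop_atTop).const_mul C
  rw [mul_zero] at ht
  obtain ⟨N, hN⟩ := eventually_atTop.1 (ht.eventually (gt_mem_nhds hlam))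
  refine aux_min (fun k => covΔ β φ k k) (fun k => (k : ℝ) ^ (2 * β - α)) hΔ lam hlam (max N 1)
    ?_ ?_
  · intro k hk
    have hk1 : 1 ≤ k := le_trans (le_max_right _ _) hk
    have hkr : (1 : ℝ) ≤ k := by exact_mod_cast hk1
    have hk0 : (0 : ℝ) < k := by linarith
    have h1 := hN k (le_trans (le_max_left _ _) hk)
    have h2 := hb k hkr
    have e1 : covΔ β φ k k = ((k : ℝ) + 1) ^ (2 * β) * φ 1
        - 2 * ((k : ℝ) ^ (2 * β) * φ (((k : ℝ) + 1) / k)) + (k : ℝ) ^ (2 * β) * φ 1 := by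
      unfold covΔ
      rw [covR_symm β φ k (k + 1), covR_of_le β φ k (k + 1) hk0 (by linarith),
        covR_of_le β φ k k hk0 le_rfl, covR_of_le β φ (k + 1) (k + 1) (by linarith) le_rfl,
        div_self hk0.ne', div_self (by linarith)]
      ring
    rw [← e1] at h2
    have e2 : (k : ℝ) ^ (2 * β - α - e) = (k : ℝ) ^ (2 * β - α) * (k : ℝ) ^ (-e) := by
      rw [← Real.rpow_add hk0]; rfl
    rw [e2] at h2
    have hp : 0 < (k : ℝ) ^ (2 * β - α) := Real.rpow_pos_of_pos hk0 _
    have h3 := (abs_le.1 h2).1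
    nlinarith [mul_lt_mul_of_pos_left h1 hp]
  · intro k hk
    have : (0 : ℝ) < k := by exact_mod_cast hk
    positivity

lemma aux_lt (β lam α ν : ℝ) (φ ψ : ℝ → ℝ)
    (hyp : SelfSimilarHyp β lam α ν φ ψ)
    (hΔ : ∀ k : ℕ, 0 < covΔ β φ k k)
    (hcase : (α < 1 ∧ 2 < α + ν) ∨ (1 < α ∧ α < 3 / 2)) :
    ∃ C : ℝ, 0 < C ∧ ∀ k l : ℕ, 1 ≤ l → l < k →
      |covδ β φ k l| ≤ C * |aFun α ((k : ℤ) - l)| := by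
  have hα2 : α < 2 := by rcases hcase with h | h <;> linarith
  have hα1 : α ≠ 1 := by rcases hcase with h | h; exacts [h.1.ne, h.1.ne']
  obtain ⟨K, hK, hφ⟩ := aux_phi β lam α ν φ ψ hyp hcase
  obtain ⟨Cn, hCn, hnear⟩ := aux_near β lam α ν φ ψ hyp hα2
  obtain ⟨c, hc, hlow⟩ := aux_lower β lam α ν φ ψ hyp hα2 hα1 hΔ
  have hβ := hyp.1
  obtain ⟨hα0, hαβ⟩ := hyp.2.2.1
  obtain ⟨c', hc', ha⟩ := aux_aFun α hα0 hα2 hα1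
  have hfar := aux_far β α φ hβ hα0 hαβ hα2 K hK hφ
  set Cf := 2 * K * 2 ^ (2 * β - α) * 2 ^ (2 - α) with hCf
  have hCf0 : 0 < Cf := by positivity
  refine ⟨(Cn + Cf) / c / c', by positivity, ?_⟩
  intro k l hl hlk
  have hlr : (1 : ℝ) ≤ l := by exact_mod_cast hl
  have hl0 : (0 : ℝ) < l := by linarith
  have hkl : (l : ℝ) + 1 ≤ k := by exact_mod_cast hlk
  have hk0 : (0 : ℝ) < k := by linarith
  have hm0 : (0 : ℝ) < (k : ℝ) - l := by linarith
  have hP : 0 < (l : ℝ) ^ (2 * β - α) := Real.rpow_pos_of_pos hl0 _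
  have hQ : 0 < ((k : ℝ) - l) ^ (α - 2) := Real.rpow_pos_of_pos hm0 _
  have hD : |covΔ β φ k l| ≤ (Cn + Cf) * ((l : ℝ) ^ (2 * β - α) * ((k : ℝ) - l) ^ (α - 2)) := by
    have e1 : covΔ β φ k l =
        (((l : ℝ) + 1) ^ (2 * β) * (φ (((k : ℝ) + 1) / (l + 1)) - φ ((k : ℝ) / (l + 1)))) -
        ((l : ℝ) ^ (2 * β) * (φ (((k : ℝ) + 1) / l) - φ ((k : ℝ) / l))) := by
      unfold covΔ
      rw [covR_of_le β φ (l + 1) (k + 1) (by linarith) (by linarith),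
        covR_of_le β φ (l + 1) k (by linarith) (by linarith),
        covR_of_le β φ l (k + 1) (by linarith) (by linarith),
        covR_of_le β φ l k (by linarith) (by linarith)]
      ring
    rw [e1]
    rcases Nat.eq_or_lt_of_le (Nat.succ_le_of_lt hlk) with h | h
    · have hk : (k : ℝ) = l + 1 := by rw [← h]; push_cast; ring
      have := hnear l hlr
      rw [hk, show (l : ℝ) + 1 - l = 1 by ring, Real.one_rpow,
        show (l : ℝ) + 1 + 1 = l + 2 by ring, div_self (by linarith)]
      nlinarith
    · have hk : (l : ℝ) + 2 ≤ k := by exact_mod_cast h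
      have := hfar l k hlr hk
      have := mul_pos hCn (mul_pos hP hQ)
      linarith
  have hS : c * (l : ℝ) ^ (2 * β - α) ≤ Real.sqrt (covΔ β φ k k * covΔ β φ l l) := by
    apply Real.le_sqrt_of_sq_le
    have i1 := hlow l hl
    have i2 := hlow k (by omega)
    have i3 : (l : ℝ) ^ (2 * β - α) ≤ (k : ℝ) ^ (2 * β - α) :=
      Real.rpow_le_rpow hl0.le (by linarith) (by linarith)
    have i4 : c * (l : ℝ) ^ (2 * β - α) ≤ covΔ β φ k k :=
      (mul_le_mul_of_nonneg_left i3 hc.le).trans i2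
    rw [sq]
    exact mul_le_mul i4 i1 (by positivity) (hΔ k).le
  have hA := ha (k - l) (by omega)
  rw [Nat.cast_sub hlk.le, Nat.cast_sub hlk.le] at hA
  unfold covδ
  rw [abs_div, abs_of_nonneg (Real.sqrt_nonneg _)]
  calc _ ≤ (Cn + Cf) * ((l : ℝ) ^ (2 * β - α) * ((k : ℝ) - l) ^ (α - 2)) /
        (c * (l : ℝ) ^ (2 * β - α)) := by gcongr
    _ = (Cn + Cf) / c / c' * (c' * ((k : ℝ) - l) ^ (α - 2)) := by field_simp
    _ ≤ _ := by gcongr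

/-- if `α < 1 and α + ν > 2`, or `1 < α < 3/2`, then there is a
constant `C > 0` with `|δ_{kl}| ≤ C |a_α(k−l)|` for all integers `k, l ≥ 1`. -/
theorem covδ_le_aFun (β lam α ν : ℝ) (φ ψ : ℝ → ℝ)
    (hyp : SelfSimilarHyp β lam α ν φ ψ)
    (hΔ : ∀ k : ℕ, 0 < covΔ β φ k k)
    (hcase : (α < 1 ∧ 2 < α + ν) ∨ (1 < α ∧ α < 3 / 2)) :
    ∃ C : ℝ, 0 < C ∧ ∀ k l : ℕ, 1 ≤ k → 1 ≤ l →
      |covδ β φ k l| ≤ C * |aFun α ((k : ℤ) - l)| := by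
  obtain ⟨C, hC, h⟩ := aux_lt β lam α ν φ ψ hyp hΔ hcase
  refine ⟨C + 1, by linarith, ?_⟩
  intro k l hk hl
  have hnn : 0 ≤ |aFun α ((k : ℤ) - l)| := abs_nonneg _
  rcases lt_trichotomy k l with hlt | heq | hlt
  · have := h l k hk hlt
    rw [covδ_symm β φ l k, show (l : ℤ) - k = -((k : ℤ) - l) by ring, aFun_neg] at this
    linarith
  · subst heq
    have e1 : covδ β φ k k = 1 := by
      unfold covδ
      rw [Real.sqrt_mul_self (hΔ k).le, div_self (hΔ k).ne']
    have e2 : aFun α ((k : ℤ) - k) = 1 := by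
      unfold aFun
      simp [Real.zero_rpow hyp.2.2.1.1.ne']
    rw [e1, e2, abs_one]
    linarith
  · have := h k l hl hlt
    linarith
end
end

section
/- There exists a universal constant C > 0 such that for every integer d ≥ 1 and every function a : ℤ → ℝ, Σ_{k,l,m,p=1}^{d} |a(k−l)| · |a(m−p)| · |a(k−m)| · |a(l−p)| ≤ C d (Σ_{m=−d+1}^{d−1} |a(m)|^{4/3})³. -/
lemma path_bound (S : Finset ℕ) (B : ℝ) (f g h : ℕ → ℕ → ℝ)
    (f0 : ∀ x y, 0 ≤ f x y) (g0 : ∀ x y, 0 ≤ g x y) (hB : 0 ≤ B)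
    (hf : ∀ x ∈ S, ∑ y ∈ S, f x y ≤ B) (hg : ∀ x ∈ S, ∑ y ∈ S, g x y ≤ B)
    (hh : ∀ x ∈ S, ∑ y ∈ S, h x y ≤ B) :
    ∑ x ∈ S, ∑ y ∈ S, ∑ z ∈ S, ∑ w ∈ S, f x y * g y z * h z w ≤ S.card * B ^ 3 := by
  have h1 : ∀ x ∈ S, ∑ y ∈ S, ∑ z ∈ S, ∑ w ∈ S, f x y * g y z * h z w ≤ B ^ 3 := by
    intro x hx
    calc ∑ y ∈ S, ∑ z ∈ S, ∑ w ∈ S, f x y * g y z * h z w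
        ≤ ∑ y ∈ S, ∑ z ∈ S, f x y * g y z * B := by
          refine Finset.sum_le_sum fun y hy => Finset.sum_le_sum fun z hz => ?_
          rw [← Finset.mul_sum]
          exact mul_le_mul_of_nonneg_left (hh z hz) (mul_nonneg (f0 _ _) (g0 _ _))
      _ = ∑ y ∈ S, f x y * B * ∑ z ∈ S, g y z := by
          refine Finset.sum_congr rfl fun y hy => ?_
          rw [Finset.mul_sum]
          exact Finset.sum_congr rfl fun z hz => by ring
      _ ≤ ∑ y ∈ S, f x y * B * B :=
          Finset.sum_le_sum fun y hy =>
            mul_le_mul_of_nonneg_left (hg y hy) (mul_nonneg (f0 _ _) hB)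
      _ = (∑ y ∈ S, f x y) * (B * B) := by
          rw [Finset.sum_mul]
          exact Finset.sum_congr rfl fun z hz => by ring
      _ ≤ B * (B * B) := mul_le_mul_of_nonneg_right (hf x hx) (mul_nonneg hB hB)
      _ = B ^ 3 := by ring
  simpa [nsmul_eq_mul] using Finset.sum_le_card_nsmul S _ _ h1

lemma amgm_four (x y z w : ℝ) :
    x ^ 3 * y ^ 3 * z ^ 3 * w ^ 3 ≤
      (1 / 4) * (x ^ 4 * y ^ 4 * z ^ 4 + x ^ 4 * y ^ 4 * w ^ 4 + x ^ 4 * z ^ 4 * w ^ 4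
        + y ^ 4 * z ^ 4 * w ^ 4) := by
  nlinarith [sq_nonneg ((x*y*z)^2 - (x*y*w)^2), sq_nonneg ((x*z*w)^2 - (y*z*w)^2),
    sq_nonneg ((x*y*z)*(x*y*w) - (x*z*w)*(y*z*w))]

/-- there is a universal constant `C > 0` such that for every
integer `d ≥ 1` and every `a : ℤ → ℝ`,
`Σ_{k,l,m,p=1}^{d} |a(k−l)||a(m−p)||a(k−m)||a(l−p)|
  ≤ C d (Σ_{m=−d+1}^{d−1} |a(m)|^{4/3})³`. -/
theorem fourth_moment_young_inequality :
    ∃ C : ℝ, 0 < C ∧ ∀ d : ℕ, 1 ≤ d → ∀ a : ℤ → ℝ,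
      ∑ k ∈ Finset.Icc 1 d, ∑ l ∈ Finset.Icc 1 d, ∑ m ∈ Finset.Icc 1 d,
          ∑ p ∈ Finset.Icc 1 d,
            |a ((k : ℤ) - l)| * |a ((m : ℤ) - p)| * |a ((k : ℤ) - m)| *
              |a ((l : ℤ) - p)|
        ≤ C * d * (∑ m ∈ Finset.Icc (-(d : ℤ) + 1) ((d : ℤ) - 1),
            |a m| ^ ((4 : ℝ) / 3)) ^ 3 := by
  refine ⟨1, one_pos, fun d _ a => ?_⟩
  obtain ⟨c, hc⟩ : ∃ c : ℤ → ℝ, ∀ n, c n = |a n| ^ ((1 : ℝ) / 3) := ⟨_, fun _ => rfl⟩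
  have hc3 : ∀ n, |a n| = c n ^ 3 := fun n => by
    rw [hc, ← Real.rpow_natCast, ← Real.rpow_mul (abs_nonneg _)]; norm_num
  have hc4 : ∀ n, |a n| ^ ((4 : ℝ) / 3) = c n ^ 4 := fun n => by
    rw [hc, ← Real.rpow_natCast, ← Real.rpow_mul (abs_nonneg _)]; norm_num
  simp only [hc4]
  simp only [hc3]
  set B := ∑ m ∈ Finset.Icc (-(d : ℤ) + 1) ((d : ℤ) - 1), c m ^ 4 with hBdef
  have c0 : ∀ n, 0 ≤ c n ^ 4 := fun n => by positivity
  have hB : 0 ≤ B := Finset.sum_nonneg fun n _ => c0 n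
  set S := Finset.Icc 1 d with hS
  have hcard : (S.card : ℝ) = d := by simp [hS]
  have key : ∀ e : ℕ → ℤ, Function.Injective e →
      (∀ y ∈ S, e y ∈ Finset.Icc (-(d : ℤ) + 1) ((d : ℤ) - 1)) →
      ∑ y ∈ S, c (e y) ^ 4 ≤ B := by
    intro e he hm
    rw [← Finset.sum_image (f := fun n => c n ^ 4) (s := S) (g := e) (fun x _ y _ h => he h)]
    apply Finset.sum_le_sum_of_subset_of_nonneg
    · intro n hn
      obtain ⟨y, hy, rfl⟩ := Finset.mem_image.1 hn
      exact hm y hy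
    · exact fun n _ _ => c0 n
  have r1 : ∀ x ∈ S, ∑ y ∈ S, c ((x : ℤ) - y) ^ 4 ≤ B := fun x hx => by
    refine key (fun y => (x : ℤ) - y) (fun y z h => by simpa using h) fun y hy => ?_
    simp only [hS, Finset.mem_Icc] at hx hy ⊢
    omega
  have r2 : ∀ x ∈ S, ∑ y ∈ S, c ((y : ℤ) - x) ^ 4 ≤ B := fun x hx => by
    refine key (fun y => (y : ℤ) - x) (fun y z h => by simpa using h) fun y hy => ?_
    simp only [hS, Finset.mem_Icc] at hx hy ⊢
    omega
  have comm := fun F : ℕ → ℕ → ℝ => Finset.sum_comm (s := S) (t := S) (f := F)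
  -- omit l-p : path l k m p
  have t4 : ∑ k ∈ S, ∑ l ∈ S, ∑ m ∈ S, ∑ p ∈ S,
      c ((k:ℤ) - l) ^ 4 * c ((m:ℤ) - p) ^ 4 * c ((k:ℤ) - m) ^ 4 ≤ d * B ^ 3 := by
    have := path_bound S B (fun l k => c ((k:ℤ) - l) ^ 4) (fun k m => c ((k:ℤ) - m) ^ 4)
      (fun m p => c ((m:ℤ) - p) ^ 4) (fun _ _ => c0 _) (fun _ _ => c0 _) hB r2 r1 r1
    rw [hcard, comm] at this
    refine le_of_eq_of_le ?_ this
    refine Finset.sum_congr rfl fun k _ => Finset.sum_congr rfl fun l _ =>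
      Finset.sum_congr rfl fun m _ => Finset.sum_congr rfl fun p _ => by ring
  -- omit k-m : path k l p m
  have t3 : ∑ k ∈ S, ∑ l ∈ S, ∑ m ∈ S, ∑ p ∈ S,
      c ((k:ℤ) - l) ^ 4 * c ((m:ℤ) - p) ^ 4 * c ((l:ℤ) - p) ^ 4 ≤ d * B ^ 3 := by
    have := path_bound S B (fun k l => c ((k:ℤ) - l) ^ 4) (fun l p => c ((l:ℤ) - p) ^ 4)
      (fun p m => c ((m:ℤ) - p) ^ 4) (fun _ _ => c0 _) (fun _ _ => c0 _) hB r1 r1 r2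
    rw [hcard] at this
    refine le_of_eq_of_le ?_ this
    refine Finset.sum_congr rfl fun k _ => Finset.sum_congr rfl fun l _ => ?_
    rw [comm]
    refine Finset.sum_congr rfl fun m _ => Finset.sum_congr rfl fun p _ => by ring
  -- omit m-p : path m k l p
  have t2 : ∑ k ∈ S, ∑ l ∈ S, ∑ m ∈ S, ∑ p ∈ S,
      c ((k:ℤ) - l) ^ 4 * c ((k:ℤ) - m) ^ 4 * c ((l:ℤ) - p) ^ 4 ≤ d * B ^ 3 := by
    have := path_bound S B (fun m k => c ((k:ℤ) - m) ^ 4) (fun k l => c ((k:ℤ) - l) ^ 4)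
      (fun l p => c ((l:ℤ) - p) ^ 4) (fun _ _ => c0 _) (fun _ _ => c0 _) hB r2 r1 r1
    rw [hcard, comm] at this
    refine le_of_eq_of_le ?_ this
    refine Finset.sum_congr rfl fun k _ => ?_
    rw [comm]
    refine Finset.sum_congr rfl fun l _ =>
      Finset.sum_congr rfl fun m _ => Finset.sum_congr rfl fun p _ => by ring
  -- omit k-l : path k m p l
  have t1 : ∑ k ∈ S, ∑ l ∈ S, ∑ m ∈ S, ∑ p ∈ S,
      c ((m:ℤ) - p) ^ 4 * c ((k:ℤ) - m) ^ 4 * c ((l:ℤ) - p) ^ 4 ≤ d * B ^ 3 := by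
    have := path_bound S B (fun k m => c ((k:ℤ) - m) ^ 4) (fun m p => c ((m:ℤ) - p) ^ 4)
      (fun p l => c ((l:ℤ) - p) ^ 4) (fun _ _ => c0 _) (fun _ _ => c0 _) hB r1 r1 r2
    rw [hcard] at this
    refine le_of_eq_of_le ?_ this
    refine Finset.sum_congr rfl fun k _ => ?_
    rw [comm]
    refine Finset.sum_congr rfl fun m _ => ?_
    rw [comm]
    refine Finset.sum_congr rfl fun l _ => Finset.sum_congr rfl fun p _ => by ring
  have main := Finset.sum_le_sum fun k (_ : k ∈ S) => Finset.sum_le_sum fun l (_ : l ∈ S) =>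
    Finset.sum_le_sum fun m (_ : m ∈ S) => Finset.sum_le_sum fun p (_ : p ∈ S) =>
      amgm_four (c ((k:ℤ) - l)) (c ((m:ℤ) - p)) (c ((k:ℤ) - m)) (c ((l:ℤ) - p))
  refine main.trans ?_
  simp only [← Finset.mul_sum, Finset.sum_add_distrib] at t1 t2 t3 t4 ⊢
  linarith
end
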